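/- Let k be an algebraically closed field of characteristic zero, let Δ be trinomial data over k with unit partition, let B be a k-algebra isomorphic to a polynomial ring k[x_1,…,x_m] for some m ≥ 2, and let A ⊆ B be a factorially closed k-subalgebra isomorphic to k[Δ]. Then A is isomorphic as a k-algebra to a polynomial ring in two variables over k. -/

import Mathlib

open MvPolynomial

/-- Trinomial data over `k` with unit partition: pairwise relatively prime positive integers
`β_0, …, β_r` (`r ≥ 1`) and distinct scalars `λ_2, …, λ_r ∈ k^*`; the associated ring is
`k[T_0, …, T_r]/(T_0^{β_0} + λ_i T_1^{β_1} + T_i^{β_i} : 2 ≤ i ≤ r)`. -/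
structure MoriData (k : Type*) [Field k] where
  /-- the number of variables minus one -/
  r : ℕ
  one_le_r : 1 ≤ r
  /-- the exponents `β_i` -/
  β : Fin (r + 1) → ℕ
  β_pos : ∀ i, 0 < β i
  coprime : ∀ i j, i ≠ j → Nat.Coprime (β i) (β j)
  /-- the scalars `λ_i` (only the values for `2 ≤ i` are relevant) -/
  lam : Fin (r + 1) → k
  lam_ne_zero : ∀ i : Fin (r + 1), 2 ≤ (i : ℕ) → lam i ≠ 0
  lam_injOn : ∀ i j : Fin (r + 1), 2 ≤ (i : ℕ) → 2 ≤ (j : ℕ) → lam i = lam j → i = j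

variable {k : Type*} [Field k]

/-- The ring `k[Δ]` associated to trinomial data `Δ` with unit partition. -/
noncomputable abbrev MoriData.Ring (Δ : MoriData k) : Type _ :=
  MvPolynomial (Fin (Δ.r + 1)) k ⧸
    (Ideal.span {p | ∃ i : Fin (Δ.r + 1), 2 ≤ (i : ℕ) ∧
      p = X 0 ^ Δ.β 0 + C (Δ.lam i) * X 1 ^ Δ.β 1 + X i ^ Δ.β i} :
      Ideal (MvPolynomial (Fin (Δ.r + 1)) k))

/-- `Δ` is in Mori form if either `r = 1` and `β_0 = β_1 = 1`, or `r ≥ 2`, `λ_2 = 1` and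
`β_0 > β_1 > ⋯ > β_r ≥ 2`. -/
def MoriData.MoriForm (Δ : MoriData k) : Prop :=
  (Δ.r = 1 ∧ Δ.β 0 = 1 ∧ Δ.β 1 = 1) ∨
  (2 ≤ Δ.r ∧ (∀ i : Fin (Δ.r + 1), (i : ℕ) = 2 → Δ.lam i = 1) ∧
    (∀ i j : Fin (Δ.r + 1), i < j → Δ.β j < Δ.β i) ∧
    (∀ i : Fin (Δ.r + 1), (i : ℕ) = Δ.r → 2 ≤ Δ.β i))

set_option linter.unusedVariables false
namespace E8

def kf {R : Type*} [CommRing R] (u v : R) : R := u * v * (u^10 + 11 * u^5 * v^5 - v^10)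
def kH {R : Type*} [CommRing R] (u v : R) : R :=
  -(u^20 + v^20) + 228 * (u^15 * v^5 - u^5 * v^15) - 494 * u^10 * v^10
def kT {R : Type*} [CommRing R] (u v : R) : R :=
  (u^30 + v^30) + 522 * (u^25 * v^5 - u^5 * v^25) - 10005 * (u^20 * v^10 + u^10 * v^20)
def kfu {R : Type*} [CommRing R] (u v : R) : R := 11 * u^10 * v + 66 * u^5 * v^6 - v^11
def kfv {R : Type*} [CommRing R] (u v : R) : R := u^11 + 66 * u^6 * v^5 - 11 * u * v^10
def kHu {R : Type*} [CommRing R] (u v : R) : R :=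
  -20 * u^19 + 228 * (15 * u^14 * v^5 - 5 * u^4 * v^15) - 4940 * u^9 * v^10
def kHv {R : Type*} [CommRing R] (u v : R) : R :=
  -20 * v^19 + 228 * (5 * u^15 * v^4 - 15 * u^5 * v^14) - 4940 * u^10 * v^9

lemma klein {R : Type*} [CommRing R] (u v : R) : kT u v ^ 2 + kH u v ^ 3 = 1728 * kf u v ^ 5 := by
  simp only [kf, kH, kT]; ring

lemma euler_f {R : Type*} [CommRing R] (u v : R) : u * kfu u v + v * kfv u v = 12 * kf u v := by
  simp only [kf, kfu, kfv]; ring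

lemma euler_H {R : Type*} [CommRing R] (u v : R) : u * kHu u v + v * kHv u v = 20 * kH u v := by
  simp only [kH, kHu, kHv]; ring

lemma jac_fH {R : Type*} [CommRing R] (u v : R) :
    kfv u v * kHu u v - kfu u v * kHv u v = -20 * kT u v := by
  simp only [kT, kfu, kfv, kHu, kHv]; ring

lemma cert_u {R : Type*} [CommRing R] (u v : R) : 3125 * u^31 =
    (679478 * u^15 * v^4 - 1485989 * u^10 * v^9 - 684695 * u^5 * v^14 - 3003 * v^19) * kf u v
    + (-3125 * u^11 - 33022 * u^6 * v^5 + 3003 * u * v^10) * kH u v := by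
  simp only [kf, kH]; ring

lemma cert_v {R : Type*} [CommRing R] (u v : R) : 3125 * v^31 =
    (679478 * u^4 * v^15 + 1485989 * u^9 * v^10 - 684695 * u^14 * v^5 + 3003 * u^19) * kf u v
    + (-3125 * v^11 + 33022 * u^5 * v^6 + 3003 * u^10 * v) * kH u v := by
  simp only [kf, kH]; ring

def kc0 {R : Type*} [CommRing R] (p q r s : R) : R :=
    1*p^11*q^1 + 11*p^6*q^6 + (-1)*p^1*q^11

def kc1 {R : Type*} [CommRing R] (p q r s : R) : R :=
    1*p^11*s^1 + 11*p^10*q^1*r^1 + 66*p^6*q^5*s^1 + 66*p^5*q^6*r^1 + (-11)*p^1*q^10*s^1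
     + (-1)*q^11*r^1

def kc2 {R : Type*} [CommRing R] (p q r s : R) : R :=
    11*p^10*r^1*s^1 + 55*p^9*q^1*r^2 + 165*p^6*q^4*s^2 + 396*p^5*q^5*r^1*s^1 + 165*p^4*q^6*r^2
     + (-55)*p^1*q^9*s^2 + (-11)*q^10*r^1*s^1

def kc3 {R : Type*} [CommRing R] (p q r s : R) : R :=
    55*p^9*r^2*s^1 + 165*p^8*q^1*r^3 + 220*p^6*q^3*s^3 + 990*p^5*q^4*r^1*s^2
     + 990*p^4*q^5*r^2*s^1 + 220*p^3*q^6*r^3 + (-165)*p^1*q^8*s^3 + (-55)*q^9*r^1*s^2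

def kc4 {R : Type*} [CommRing R] (p q r s : R) : R :=
    165*p^8*r^3*s^1 + 330*p^7*q^1*r^4 + 165*p^6*q^2*s^4 + 1320*p^5*q^3*r^1*s^3
     + 2475*p^4*q^4*r^2*s^2 + 1320*p^3*q^5*r^3*s^1 + 165*p^2*q^6*r^4 + (-330)*p^1*q^7*s^4
     + (-165)*q^8*r^1*s^3

def kc5 {R : Type*} [CommRing R] (p q r s : R) : R :=
    330*p^7*r^4*s^1 + 462*p^6*q^1*r^5 + 66*p^6*q^1*s^5 + 990*p^5*q^2*r^1*s^4
     + 3300*p^4*q^3*r^2*s^3 + 3300*p^3*q^4*r^3*s^2 + 990*p^2*q^5*r^4*s^1 + 66*p^1*q^6*r^5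
     + (-462)*p^1*q^6*s^5 + (-330)*q^7*r^1*s^4

def kc6 {R : Type*} [CommRing R] (p q r s : R) : R :=
    462*p^6*r^5*s^1 + 462*p^5*q^1*r^6 + 11*p^6*s^6 + 396*p^5*q^1*r^1*s^5 + 2475*p^4*q^2*r^2*s^4
     + 4400*p^3*q^3*r^3*s^3 + 2475*p^2*q^4*r^4*s^2 + 396*p^1*q^5*r^5*s^1 + 11*q^6*r^6
     + (-462)*p^1*q^5*s^6 + (-462)*q^6*r^1*s^5

def kc7 {R : Type*} [CommRing R] (p q r s : R) : R :=
    462*p^5*r^6*s^1 + 330*p^4*q^1*r^7 + 66*p^5*r^1*s^6 + 990*p^4*q^1*r^2*s^5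
     + 3300*p^3*q^2*r^3*s^4 + 3300*p^2*q^3*r^4*s^3 + 990*p^1*q^4*r^5*s^2 + 66*q^5*r^6*s^1
     + (-330)*p^1*q^4*s^7 + (-462)*q^5*r^1*s^6

def kc8 {R : Type*} [CommRing R] (p q r s : R) : R :=
    330*p^4*r^7*s^1 + 165*p^3*q^1*r^8 + 165*p^4*r^2*s^6 + 1320*p^3*q^1*r^3*s^5
     + 2475*p^2*q^2*r^4*s^4 + 1320*p^1*q^3*r^5*s^3 + 165*q^4*r^6*s^2 + (-165)*p^1*q^3*s^8
     + (-330)*q^4*r^1*s^7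

def kc9 {R : Type*} [CommRing R] (p q r s : R) : R :=
    165*p^3*r^8*s^1 + 55*p^2*q^1*r^9 + 220*p^3*r^3*s^6 + 990*p^2*q^1*r^4*s^5
     + 990*p^1*q^2*r^5*s^4 + 220*q^3*r^6*s^3 + (-55)*p^1*q^2*s^9 + (-165)*q^3*r^1*s^8

def kc10 {R : Type*} [CommRing R] (p q r s : R) : R :=
    55*p^2*r^9*s^1 + 11*p^1*q^1*r^10 + 165*p^2*r^4*s^6 + 396*p^1*q^1*r^5*s^5 + 165*q^2*r^6*s^4
     + (-11)*p^1*q^1*s^10 + (-55)*q^2*r^1*s^9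

def kc11 {R : Type*} [CommRing R] (p q r s : R) : R :=
    11*p^1*r^10*s^1 + 1*q^1*r^11 + 66*p^1*r^5*s^6 + 66*q^1*r^6*s^5 + (-1)*p^1*s^11
     + (-11)*q^1*r^1*s^10

def kc12 {R : Type*} [CommRing R] (p q r s : R) : R :=
    1*r^11*s^1 + 11*r^6*s^6 + (-1)*r^1*s^11


lemma kf_taylor {R : Type*} [CommRing R] (p q r s e : R) :
    kf (p + e * r) (q + e * s) = kc0 p q r s + e * kc1 p q r s + e^2 * kc2 p q r s
      + e^3 * kc3 p q r s + e^4 * (kc4 p q r s + e * kc5 p q r s + e^2 * kc6 p q r s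
      + e^3 * kc7 p q r s + e^4 * kc8 p q r s + e^5 * kc9 p q r s + e^6 * kc10 p q r s
      + e^7 * kc11 p q r s + e^8 * kc12 p q r s) := by
  simp only [kf, kc0, kc1, kc2, kc3, kc4, kc5, kc6, kc7, kc8, kc9, kc10, kc11, kc12]; ring

lemma kc0_eq {R : Type*} [CommRing R] (p q r s : R) : kc0 p q r s = kf p q := by
  simp only [kf, kc0]; ring

lemma kc1_eq {R : Type*} [CommRing R] (p q r s : R) :
    kc1 p q r s = kfu p q * r + kfv p q * s := by
  simp only [kfu, kfv, kc1]; ring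

lemma hess_id {R : Type*} [CommRing R] (p q r s : R) :
    11 * (kH p q * (p * s - q * r)^2) =
      24 * (kc0 p q r s * kc2 p q r s) - 11 * kc1 p q r s ^ 2 := by
  simp only [kH, kc0, kc1, kc2]; ring

lemma hess_id' {R : Type*} [CommRing R] (p q r s : R) :
    11 * ((kHu p q * r + kHv p q * s) * (p * s - q * r)^2) =
      24 * (kc1 p q r s * kc2 p q r s + 3 * (kc0 p q r s * kc3 p q r s))
      - 44 * (kc1 p q r s * kc2 p q r s) := by
  simp only [kHu, kHv, kc0, kc1, kc2, kc3]; ring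

def kG {R : Type*} [CommRing R] (f h t X Y : R) : R :=
      f * (X^12 + 66 * h * X^10 * Y^2 - 440 * t * X^9 * Y^3
        - 1485 * h ^ 2 * X^8 * Y^4 + 3168 * h * t * X^7 * Y^5
        + (-18247680 * f ^ 5 + 4620 * h ^ 3) * X^6 * Y^6
        - 4752 * h ^ 2 * t * X^5 * Y^7
        + (-109486080 * f ^ 5 * h - 3465 * h ^ 4) * X^4 * Y^8
        + (243302400 * f ^ 5 * t + 1760 * h ^ 3 * t) * X^3 * Y^9
        + (229920768 * f ^ 5 * h ^ 2 + 594 * h ^ 5) * X^2 * Y^10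
        + (-106168320 * f ^ 5 * h * t - 120 * h ^ 4 * t) * X * Y^11
        + (305764761600 * f ^ 10 - 19464192 * f ^ 5 * h ^ 3
           - 11 * h ^ 6) * Y^12)

set_option maxHeartbeats 4000000 in
lemma big_id {R : Type*} [CommRing R] (u v X Y : R) :
    kf (X * u + Y * kfv u v) (X * v - Y * kfu u v) =
      kG (kf u v) (kH u v) (kT u v) X Y := by
  simp only [kG, kf, kH, kT, kfu, kfv]; ring

lemma Hv_id {R : Type*} [CommRing R] (u v : R) :
    3 * kf u v * kHv u v = 5 * kT u v * u + 5 * kH u v * kfv u v := by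
  simp only [kf, kH, kT, kfv, kHv]; ring

lemma Hu_id {R : Type*} [CommRing R] (u v : R) :
    3 * kf u v * (-kHu u v) = 5 * kT u v * v - 5 * kH u v * kfu u v := by
  simp only [kf, kH, kT, kfu, kHu]; ring

lemma map_kG {R S : Type*} [CommRing R] [CommRing S] (φ : R →+* S) (f h t X Y : R) :
    φ (kG f h t X Y) = kG (φ f) (φ h) (φ t) (φ X) (φ Y) := by simp [kG, map_ofNat]

lemma map_kc0 {R S : Type*} [CommRing R] [CommRing S] (φ : R →+* S) (p q r s : R) :
    φ (kc0 p q r s) = kc0 (φ p) (φ q) (φ r) (φ s) := by simp [kc0, map_ofNat]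

lemma map_kc1 {R S : Type*} [CommRing R] [CommRing S] (φ : R →+* S) (p q r s : R) :
    φ (kc1 p q r s) = kc1 (φ p) (φ q) (φ r) (φ s) := by simp [kc1, map_ofNat]

lemma map_kc2 {R S : Type*} [CommRing R] [CommRing S] (φ : R →+* S) (p q r s : R) :
    φ (kc2 p q r s) = kc2 (φ p) (φ q) (φ r) (φ s) := by simp [kc2, map_ofNat]

lemma map_kc3 {R S : Type*} [CommRing R] [CommRing S] (φ : R →+* S) (p q r s : R) :
    φ (kc3 p q r s) = kc3 (φ p) (φ q) (φ r) (φ s) := by simp [kc3, map_ofNat]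

end E8

namespace E8
noncomputable section

lemma map_kf {R S : Type*} [CommRing R] [CommRing S] (φ : R →+* S) (u v : R) :
    φ (kf u v) = kf (φ u) (φ v) := by simp [kf, map_ofNat]
lemma map_kH {R S : Type*} [CommRing R] [CommRing S] (φ : R →+* S) (u v : R) :
    φ (kH u v) = kH (φ u) (φ v) := by simp [kH, map_ofNat]
lemma map_kT {R S : Type*} [CommRing R] [CommRing S] (φ : R →+* S) (u v : R) :
    φ (kT u v) = kT (φ u) (φ v) := by simp [kT, map_ofNat]
lemma map_kfu {R S : Type*} [CommRing R] [CommRing S] (φ : R →+* S) (u v : R) :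
    φ (kfu u v) = kfu (φ u) (φ v) := by simp [kfu, map_ofNat]
lemma map_kfv {R S : Type*} [CommRing R] [CommRing S] (φ : R →+* S) (u v : R) :
    φ (kfv u v) = kfv (φ u) (φ v) := by simp [kfv, map_ofNat]
lemma map_kHu {R S : Type*} [CommRing R] [CommRing S] (φ : R →+* S) (u v : R) :
    φ (kHu u v) = kHu (φ u) (φ v) := by simp [kHu, map_ofNat]
lemma map_kHv {R S : Type*} [CommRing R] [CommRing S] (φ : R →+* S) (u v : R) :
    φ (kHv u v) = kHv (φ u) (φ v) := by simp [kHv, map_ofNat]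

/-- sup-norm of a pair. -/
def nrm {F : Type*} [Field F] (V : ValuationSubring F) (p q : F) : V.ValueGroup :=
  max (V.valuation p) (V.valuation q)

section
variable {F : Type*} [Field F] (V : ValuationSubring F)

lemma exists_scale (p q : F) (h : ¬ (p = 0 ∧ q = 0)) :
    ∃ (d : F) (p' q' : V), d ≠ 0 ∧ p = d * p' ∧ q = d * q' ∧ (p' = 1 ∨ q' = 1) ∧
      nrm V p q = V.valuation d := by
  rcases le_total (V.valuation p) (V.valuation q) with hle | hle
  · have hq : q ≠ 0 := by
      rintro rfl
      simp only [map_zero, le_zero_iff, map_eq_zero] at hle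
      exact h ⟨hle, rfl⟩
    have hq' : V.valuation q ≠ 0 := by simpa using hq
    refine ⟨q, ⟨p / q, ?_⟩, 1, hq, ?_, by simp, Or.inr rfl, by simp [nrm, hle]⟩
    · rw [← V.valuation_le_one_iff, map_div₀]
      exact div_le_one_of_le₀ hle (zero_le)
    · field_simp
  · have hq : p ≠ 0 := by
      rintro rfl
      simp only [map_zero, le_zero_iff, map_eq_zero] at hle
      exact h ⟨rfl, hle⟩
    have hq' : V.valuation p ≠ 0 := by simpa using hq
    refine ⟨p, 1, ⟨q / p, ?_⟩, hq, by simp, ?_, Or.inl rfl, by simp [nrm, hle]⟩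
    · rw [← V.valuation_le_one_iff, map_div₀]
      exact div_le_one_of_le₀ hle (zero_le)
    · field_simp

lemma kf_coe (p q : V) : ((kf p q : V) : F) = kf (p : F) q := map_kf V.subtype p q
lemma kH_coe (p q : V) : ((kH p q : V) : F) = kH (p : F) q := map_kH V.subtype p q
lemma kfu_coe (p q : V) : ((kfu p q : V) : F) = kfu (p : F) q := map_kfu V.subtype p q
lemma kfv_coe (p q : V) : ((kfv p q : V) : F) = kfv (p : F) q := map_kfv V.subtype p q
lemma kHu_coe (p q : V) : ((kHu p q : V) : F) = kHu (p : F) q := map_kHu V.subtype p q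
lemma kHv_coe (p q : V) : ((kHv p q : V) : F) = kHv (p : F) q := map_kHv V.subtype p q

lemma kf_smul {R : Type*} [CommRing R] (d p q : R) : kf (d * p) (d * q) = d^12 * kf p q := by
  simp only [kf]; ring
lemma kH_smul {R : Type*} [CommRing R] (d p q : R) : kH (d * p) (d * q) = d^20 * kH p q := by
  simp only [kH]; ring
lemma kfu_smul {R : Type*} [CommRing R] (d p q : R) : kfu (d * p) (d * q) = d^11 * kfu p q := by
  simp only [kfu]; ring
lemma kfv_smul {R : Type*} [CommRing R] (d p q : R) : kfv (d * p) (d * q) = d^11 * kfv p q := by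
  simp only [kfv]; ring
lemma kHu_smul {R : Type*} [CommRing R] (d p q : R) : kHu (d * p) (d * q) = d^19 * kHu p q := by
  simp only [kHu]; ring
lemma kHv_smul {R : Type*} [CommRing R] (d p q : R) : kHv (d * p) (d * q) = d^19 * kHv p q := by
  simp only [kHv]; ring

lemma nrm_bounds (p q : F) (h : ¬ (p = 0 ∧ q = 0)) :
    V.valuation (kf p q) ≤ nrm V p q ^ 12 ∧ V.valuation (kH p q) ≤ nrm V p q ^ 20 ∧
    V.valuation (kfu p q) ≤ nrm V p q ^ 11 ∧ V.valuation (kfv p q) ≤ nrm V p q ^ 11 ∧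
    V.valuation (kHu p q) ≤ nrm V p q ^ 19 ∧ V.valuation (kHv p q) ≤ nrm V p q ^ 19 := by
  obtain ⟨d, p', q', hd, rfl, rfl, -, hn⟩ := exists_scale V p q h
  rw [hn, kf_smul, kH_smul, kfu_smul, kfv_smul, kHu_smul, kHv_smul, ← kf_coe, ← kH_coe,
    ← kfu_coe, ← kfv_coe, ← kHu_coe, ← kHv_coe]
  simp only [map_mul, map_pow]
  refine ⟨?_, ?_, ?_, ?_, ?_, ?_⟩ <;>
  exact mul_le_of_le_one_right' (V.valuation_le_one _)

lemma nrm_le (hV : (3125 : F)⁻¹ ∈ V) (h0 : (3125 : F) ≠ 0) (p q : F) (h : ¬ (p = 0 ∧ q = 0)) :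
    nrm V p q ^ 12 = V.valuation (kf p q) ∨ nrm V p q ^ 20 = V.valuation (kH p q) := by
  obtain ⟨d, p', q', hd, rfl, rfl, h1, hn⟩ := exists_scale V p q h
  rw [hn, kf_smul, kH_smul, ← kf_coe, ← kH_coe]
  simp only [map_mul, map_pow]
  have hu : IsUnit (3125 : V) := by
    refine IsUnit.of_mul_eq_one ⟨_, hV⟩ ?_
    apply Subtype.ext
    change (3125 : F) * (3125 : F)⁻¹ = 1
    exact mul_inv_cancel₀ h0
  have key : ∃ a b : V, (3125 : V) = a * kf p' q' + b * kH p' q' := by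
    rcases h1 with rfl | rfl
    · exact ⟨_, _, by simpa using cert_u (1 : V) q'⟩
    · exact ⟨_, _, by simpa using cert_v p' (1 : V)⟩
  obtain ⟨a, b, hab⟩ := key
  rw [hab] at hu
  rcases IsLocalRing.isUnit_or_isUnit_of_isUnit_add hu with hu | hu
  · left
    rw [(V.valuation_eq_one_iff _).1 (isUnit_of_mul_isUnit_right hu), mul_one]
  · right
    rw [(V.valuation_eq_one_iff _).1 (isUnit_of_mul_isUnit_right hu), mul_one]

/-- integrality of the coordinates over any subring containing the values -/
lemma integral_coords {R : Type*} [CommRing R] [Algebra R F] (hR : IsUnit (3125 : R))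
    (p q : F) (hf : IsIntegral R (kf p q)) (hH : IsIntegral R (kH p q)) :
    IsIntegral R p ∧ IsIntegral R q := by
  have h0 : (3125 : F) ≠ 0 := by
    have := hR.map (algebraMap R F)
    rw [map_ofNat] at this
    exact this.ne_zero
  by_cases hpq : p = 0 ∧ q = 0
  · rw [hpq.1, hpq.2]; exact ⟨isIntegral_zero, isIntegral_zero⟩
  have main : ∀ V : ValuationSubring F, ((algebraMap R F).range : Set F) ⊆ V.toSubring →
      p ∈ V.toSubring ∧ q ∈ V.toSubring := by
    intro V hV
    have hint : ∀ x : F, IsIntegral R x → x ∈ V := by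
      intro x hx
      have hx' : x ∈ (integralClosure (Subring.closure ((algebraMap R F).range : Set F)) F).toSubring := by
        rw [Subring.closure_eq]
        change IsIntegral _ x
        obtain ⟨P, hP, hPx⟩ := hx
        refine ⟨P.map (algebraMap R F).rangeRestrict, hP.map _, ?_⟩
        rw [Polynomial.eval₂_map]
        exact hPx
      rw [← iInf_valuationSubring_superset] at hx'
      simp only [Subring.mem_iInf] at hx'
      exact hx' ⟨V, hV⟩
    have hinv : (3125 : F)⁻¹ ∈ V := by
      obtain ⟨w, hw⟩ := hR.exists_right_inv
      have : algebraMap R F w = (3125 : F)⁻¹ := by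
        have := congrArg (algebraMap R F) hw
        simp only [map_mul, map_ofNat, map_one] at this
        exact (inv_eq_of_mul_eq_one_right this).symm
      rw [← this]
      exact hV ⟨w, rfl⟩
    have hn : nrm V p q ≤ 1 := by
      rcases nrm_le V hinv h0 p q hpq with h | h
      · have : nrm V p q ^ 12 ≤ 1 := h ▸ (V.valuation_le_one_iff _).2 (hint _ hf)
        exact (pow_le_one_iff (by norm_num)).1 this
      · have : nrm V p q ^ 20 ≤ 1 := h ▸ (V.valuation_le_one_iff _).2 (hint _ hH)
        exact (pow_le_one_iff (by norm_num)).1 this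
    constructor
    · exact (V.valuation_le_one_iff _).1 ((le_max_left _ _).trans hn)
    · exact (V.valuation_le_one_iff _).1 ((le_max_right _ _).trans hn)
  have fin : ∀ x : F, (∀ V : ValuationSubring F,
      ((algebraMap R F).range : Set F) ⊆ V.toSubring → x ∈ V.toSubring) → IsIntegral R x := by
    intro x hx
    have hx' : x ∈ (integralClosure (Subring.closure ((algebraMap R F).range : Set F)) F).toSubring := by
      rw [← iInf_valuationSubring_superset]
      simp only [Subring.mem_iInf]
      rintro ⟨V, hV⟩
      exact hx V hV
    rw [Subring.closure_eq] at hx'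
    change IsIntegral _ x at hx'
    obtain ⟨P, hP, hPx⟩ := hx'
    obtain ⟨Q, hQ, -, hQm⟩ := Polynomial.lifts_and_natDegree_eq_and_monic
      ((Polynomial.mem_lifts (f := (algebraMap R F).rangeRestrict) P).2
        (Polynomial.map_surjective _ (algebraMap R F).rangeRestrict_surjective P)) hP
    refine ⟨Q, hQm, ?_⟩
    rw [← hQ, Polynomial.eval₂_map] at hPx
    exact hPx
  exact ⟨fin p fun V hV => (main V hV).1, fin q fun V hV => (main V hV).2⟩

end
end
end E8

namespace E8
noncomputable section

section core
variable {K F : Type*} [Field K] [CharZero K] [Field F] [Algebra (Polynomial K) F]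

/-- The fraction field of `K[t]` inside `F`. -/
def LL (hinj : Function.Injective (algebraMap (Polynomial K) F)) : Subfield F :=
  (IsFractionRing.lift (K := FractionRing (Polynomial K)) hinj).fieldRange

omit [CharZero K] in
lemma mem_LL_base (hinj : Function.Injective (algebraMap (Polynomial K) F)) (a : Polynomial K) :
    algebraMap (Polynomial K) F a ∈ LL hinj :=
  ⟨algebraMap _ _ a, by simp⟩

omit [CharZero K] in
lemma mem_range_of_LL (hinj : Function.Injective (algebraMap (Polynomial K) F)) {e : F}
    (he : e ∈ LL hinj) (hi : IsIntegral (Polynomial K) e) :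
    ∃ a, algebraMap (Polynomial K) F a = e := by
  obtain ⟨w, rfl⟩ := he
  have h2 : IsIntegral (Polynomial K) w := by
    have := (isIntegral_algHom_iff
      (IsFractionRing.liftAlgHom (K := FractionRing (Polynomial K)) (g := Algebra.ofId (Polynomial K) F) hinj)
      (RingHom.injective _) (x := w)).1
    exact this hi
  obtain ⟨a, rfl⟩ := IsIntegrallyClosed.isIntegral_iff.1 h2
  exact ⟨a, by simp⟩

/-- The lattice. -/
def MM (hinj : Function.Injective (algebraMap (Polynomial K) F)) (u v p q : F) : Prop :=
  IsIntegral (Polynomial K) p ∧ IsIntegral (Polynomial K) q ∧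
    ∃ X ∈ LL hinj, ∃ Y ∈ LL hinj, p = X * u + Y * kfv u v ∧ q = X * v - Y * kfu u v

variable (hinj : Function.Injective (algebraMap (Polynomial K) F)) {u v : F} {x y z : Polynomial K}
  (hz : kf u v = algebraMap _ F z) (hy : kH u v = algebraMap _ F y) (hx : kT u v = algebraMap _ F x)

omit [CharZero K] in
lemma coeffs_mem (S : Subring F) (P : Polynomial F)
    (h : ∃ Q : Polynomial S, Q.map S.subtype = P) (i : ℕ) : P.coeff i ∈ S := by
  obtain ⟨Q, rfl⟩ := h
  rw [Polynomial.coeff_map]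
  exact (Q.coeff i).2

omit [CharZero K] [Algebra (Polynomial K) F] in
lemma coeff_taylor (p q r s : F) :
    let P := kf (Polynomial.C p + Polynomial.X * Polynomial.C r)
      (Polynomial.C q + Polynomial.X * Polynomial.C s)
    P.coeff 0 = kc0 p q r s ∧ P.coeff 1 = kc1 p q r s ∧ P.coeff 2 = kc2 p q r s ∧
      P.coeff 3 = kc3 p q r s := by
  intro P
  have := kf_taylor (Polynomial.C p) (Polynomial.C q) (Polynomial.C r) (Polynomial.C s) Polynomial.X
  rw [← map_kc0, ← map_kc1, ← map_kc2, ← map_kc3, ← pow_one (Polynomial.X * Polynomial.C (kc1 p q r s)), pow_one] at this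
  simp only [P, this, Polynomial.coeff_add, Polynomial.coeff_X_pow_mul', Polynomial.coeff_C]
  refine ⟨?_, ?_, ?_, ?_⟩ <;> simp [Polynomial.coeff_X_mul, Polynomial.coeff_C]

include hz hy hx in
omit [CharZero K] in
lemma kc_mem {p q r s : F} (h1 : MM hinj u v p q) (h2 : MM hinj u v r s) :
    (∃ a : Polynomial K, algebraMap (Polynomial K) F a = kc0 p q r s) ∧ (∃ a : Polynomial K, algebraMap (Polynomial K) F a = kc1 p q r s) ∧
    (∃ a : Polynomial K, algebraMap (Polynomial K) F a = kc2 p q r s) ∧ (∃ a : Polynomial K, algebraMap (Polynomial K) F a = kc3 p q r s) := by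
  obtain ⟨hp, hq, X1, hX1, Y1, hY1, e1, e2⟩ := h1
  obtain ⟨hr, hs, X2, hX2, Y2, hY2, e3, e4⟩ := h2
  have hc := coeff_taylor p q r s
  set P := kf (Polynomial.C p + Polynomial.X * Polynomial.C r)
      (Polynomial.C q + Polynomial.X * Polynomial.C s) with hP
  have hI : ∀ i, P.coeff i ∈ (integralClosure (Polynomial K) F).toSubring := by
    apply coeffs_mem
    let O := (integralClosure (Polynomial K) F).toSubring
    refine ⟨kf (Polynomial.C (⟨p, hp⟩ : O) + Polynomial.X * Polynomial.C (⟨r, hr⟩ : O))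
      (Polynomial.C (⟨q, hq⟩ : O) + Polynomial.X * Polynomial.C (⟨s, hs⟩ : O)), ?_⟩
    rw [← Polynomial.coe_mapRingHom, map_kf]
    simp [hP]
    rfl
  have hL : ∀ i, P.coeff i ∈ (LL hinj).toSubring := by
    apply coeffs_mem
    let O := (LL hinj).toSubring
    let f' : O := ⟨_, mem_LL_base hinj z⟩
    let h' : O := ⟨_, mem_LL_base hinj y⟩
    let t' : O := ⟨_, mem_LL_base hinj x⟩
    refine ⟨kG (Polynomial.C f') (Polynomial.C h') (Polynomial.C t')
      (Polynomial.C (⟨X1, hX1⟩ : O) + Polynomial.X * Polynomial.C (⟨X2, hX2⟩ : O))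
      (Polynomial.C (⟨Y1, hY1⟩ : O) + Polynomial.X * Polynomial.C (⟨Y2, hY2⟩ : O)), ?_⟩
    rw [← Polynomial.coe_mapRingHom, map_kG]
    have hb := big_id (Polynomial.C u) (Polynomial.C v)
      (Polynomial.C X1 + Polynomial.X * Polynomial.C X2)
      (Polynomial.C Y1 + Polynomial.X * Polynomial.C Y2)
    rw [← map_kf, ← map_kH, ← map_kT, ← map_kfu, ← map_kfv, hz, hy, hx] at hb
    simp only [Polynomial.coe_mapRingHom, Polynomial.map_add, Polynomial.map_mul, Polynomial.map_C,
      Polynomial.map_X, f', h', t', O, Subring.subtype_apply]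
    rw [← hb, hP, e1, e2, e3, e4]
    congr 1 <;> simp only [map_add, map_mul, map_sub] <;> ring
  have fin : ∀ i, ∃ a : Polynomial K, algebraMap (Polynomial K) F a = P.coeff i := fun i =>
    mem_range_of_LL hinj (hL i) (hI i)
  obtain ⟨h0, h1, h2, h3⟩ := hc
  rw [← h0, ← h1, ← h2, ← h3]
  exact ⟨fin 0, fin 1, fin 2, fin 3⟩

/-- oriented unimodular pairs -/
def PP (u v p q r s : F) : Prop :=
  MM hinj u v p q ∧ MM hinj u v r s ∧ p * s - q * r = 1

omit [CharZero K] in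
lemma MM_neg {p q : F} (h : MM hinj u v p q) : MM hinj u v (-p) (-q) := by
  obtain ⟨hp, hq, X1, hX1, Y1, hY1, e1, e2⟩ := h
  exact ⟨hp.neg, hq.neg, -X1, neg_mem hX1, -Y1, neg_mem hY1, by rw [e1]; ring, by rw [e2]; ring⟩

omit [CharZero K] in
lemma MM_shift {p q r s : F} (h : MM hinj u v p q) (h2 : MM hinj u v r s) (g : Polynomial K) :
    MM hinj u v (r - algebraMap _ F g * p) (s - algebraMap _ F g * q) := by
  obtain ⟨hp, hq, X1, hX1, Y1, hY1, e1, e2⟩ := h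
  obtain ⟨hr, hs, X2, hX2, Y2, hY2, e3, e4⟩ := h2
  refine ⟨hr.sub (isIntegral_algebraMap.mul hp), hs.sub (isIntegral_algebraMap.mul hq),
    X2 - algebraMap _ F g * X1, sub_mem hX2 (mul_mem (mem_LL_base hinj g) hX1),
    Y2 - algebraMap _ F g * Y1, sub_mem hY2 (mul_mem (mem_LL_base hinj g) hY1), ?_, ?_⟩
  · rw [e1, e3]; ring
  · rw [e2, e4]; ring

omit [CharZero K] in
lemma PP_swap {p q r s : F} (h : PP hinj u v p q r s) : PP hinj u v r s (-p) (-q) :=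
  ⟨h.2.1, MM_neg hinj h.1, by linear_combination h.2.2⟩

omit [CharZero K] in
lemma PP_shift {p q r s : F} (h : PP hinj u v p q r s) (g : Polynomial K) :
    PP hinj u v p q (r - algebraMap _ F g * p) (s - algebraMap _ F g * q) :=
  ⟨h.1, MM_shift hinj h.1 h.2.1 g, by linear_combination h.2.2⟩

include hz hy hx in
lemma PP_vals {p q r s : F} (h : PP hinj u v p q r s) :
    (∃ a : Polynomial K, algebraMap (Polynomial K) F a = kf p q) ∧ (∃ a : Polynomial K, algebraMap (Polynomial K) F a = kfu p q * r + kfv p q * s) ∧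
    (∃ a : Polynomial K, algebraMap (Polynomial K) F a = kH p q) ∧ (∃ a : Polynomial K, algebraMap (Polynomial K) F a = kHu p q * r + kHv p q * s) := by
  obtain ⟨⟨c0, h0⟩, ⟨c1, h1⟩, ⟨c2, h2⟩, ⟨c3, h3⟩⟩ := kc_mem hinj hz hy hx h.1 h.2.1
  have e1 := hess_id p q r s
  have e2 := hess_id' p q r s
  rw [h.2.2, ← h0, ← h1, ← h2] at e1
  rw [h.2.2, ← h0, ← h1, ← h2, ← h3] at e2
  have h11 : algebraMap (Polynomial K) F (Polynomial.C (11⁻¹ : K)) * 11 = 1 := by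
    have : (Polynomial.C (11⁻¹ : K)) * 11 = 1 := by
      have h : (11 : Polynomial K) = Polynomial.C 11 := (map_ofNat Polynomial.C 11).symm
      rw [h, ← Polynomial.C_mul, inv_mul_cancel₀ (by norm_num), Polynomial.C_1]
    have := congrArg (algebraMap (Polynomial K) F) this
    simpa only [map_mul, map_ofNat, map_one] using this
  refine ⟨⟨c0, by rw [h0, kc0_eq]⟩, ⟨c1, by rw [h1, kc1_eq]⟩,
    ⟨Polynomial.C (11⁻¹ : K) * (24 * (c0 * c2) - 11 * c1 ^ 2), ?_⟩,
    ⟨Polynomial.C (11⁻¹ : K) * (24 * (c1 * c2 + 3 * (c0 * c3)) - 44 * (c1 * c2)), ?_⟩⟩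
  · simp only [map_mul, map_sub, map_add, map_pow, map_ofNat]
    linear_combination (-algebraMap (Polynomial K) F (Polynomial.C (11⁻¹ : K))) * e1 + (kH p q) * h11
  · simp only [map_mul, map_sub, map_add, map_pow, map_ofNat]
    linear_combination (-algebraMap (Polynomial K) F (Polynomial.C (11⁻¹ : K))) * e2 +
      (kHu p q * r + kHv p q * s) * h11

end core
end
end E8

namespace E8
noncomputable section

section core2
variable {K F : Type*} [Field K] [CharZero K] [Field F] [Algebra (Polynomial K) F]
variable (hinj : Function.Injective (algebraMap (Polynomial K) F)) {u v : F} {x y z : Polynomial K}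
  (hz : kf u v = algebraMap _ F z) (hy : kH u v = algebraMap _ F y) (hx : kT u v = algebraMap _ F x)

omit [CharZero K] in
include hinj in
lemma exists_val : ∃ V : ValuationSubring F,
    (∀ a : K, algebraMap (Polynomial K) F (Polynomial.C a) ∈ V) ∧
    1 < V.valuation (algebraMap (Polynomial K) F Polynomial.X) := by
  by_contra hcon
  push Not at hcon
  let κ : K →+* F := (algebraMap (Polynomial K) F).comp Polynomial.C
  have hx' : algebraMap (Polynomial K) F Polynomial.X ∈
      (integralClosure (Subring.closure (κ.range : Set F)) F).toSubring := by
    rw [← iInf_valuationSubring_superset]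
    simp only [Subring.mem_iInf]
    rintro ⟨V, hV⟩
    have := hcon V (fun a => hV ⟨a, rfl⟩)
    exact (V.valuation_le_one_iff _).1 this
  rw [Subring.closure_eq] at hx'
  change IsIntegral _ _ at hx'
  obtain ⟨P, hP, hPx⟩ := hx'
  obtain ⟨Q, hQ, -, hQm⟩ := Polynomial.lifts_and_natDegree_eq_and_monic
    ((Polynomial.mem_lifts (f := κ.rangeRestrict) P).2
      (Polynomial.map_surjective _ κ.rangeRestrict_surjective P)) hP
  rw [← hQ, Polynomial.eval₂_map] at hPx
  change Polynomial.eval₂ κ _ Q = 0 at hPx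
  rw [← Polynomial.hom_eval₂, Polynomial.eval₂_C_X] at hPx
  have : Q = 0 := hinj (by rw [hPx, map_zero])
  exact hQm.ne_zero this

variable {V : ValuationSubring F}
  (hVC : ∀ a : K, algebraMap (Polynomial K) F (Polynomial.C a) ∈ V)
  (hVX : 1 < V.valuation (algebraMap (Polynomial K) F Polynomial.X))

omit [CharZero K] in
include hVC in
lemma val_C {a : K} (ha : a ≠ 0) : V.valuation (algebraMap (Polynomial K) F (Polynomial.C a)) = 1 := by
  have h1 := (V.valuation_le_one_iff _).2 (hVC a)
  have h2 := (V.valuation_le_one_iff _).2 (hVC a⁻¹)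
  have h3 : V.valuation (algebraMap (Polynomial K) F (Polynomial.C a)) *
      V.valuation (algebraMap (Polynomial K) F (Polynomial.C a⁻¹)) = 1 := by
    rw [← map_mul, ← map_mul, ← Polynomial.C_mul, mul_inv_cancel₀ ha]; simp
  apply le_antisymm h1
  rw [← h3]
  exact mul_le_of_le_one_right' h2

omit [CharZero K] in
include hVC hVX in
lemma val_poly : ∀ (n : ℕ) (g : Polynomial K), g ≠ 0 → g.natDegree = n →
    V.valuation (algebraMap (Polynomial K) F g) =
      V.valuation (algebraMap (Polynomial K) F Polynomial.X) ^ n := by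
  intro n
  induction n with
  | zero =>
    intro g hg hn
    obtain ⟨a, rfl⟩ := Polynomial.natDegree_eq_zero.1 hn
    rw [pow_zero]
    exact val_C hVC (by rintro rfl; simp at hg)
  | succ n ih =>
    intro g hg hn
    have hd : g.divX.natDegree = n := by rw [Polynomial.natDegree_divX_eq_natDegree_tsub_one, hn]; rfl
    have hd0 : g.divX ≠ 0 := by
      intro h
      have := Polynomial.divX_mul_X_add g
      rw [h, zero_mul, zero_add] at this
      rw [← this, Polynomial.natDegree_C] at hn
      omega
    have e := Polynomial.divX_mul_X_add g
    have h2 : V.valuation (algebraMap (Polynomial K) F (g.divX * Polynomial.X)) =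
      V.valuation (algebraMap (Polynomial K) F Polynomial.X) ^ (n+1) := by
      rw [map_mul, map_mul, ih _ hd0 hd, pow_succ]
    rw [← h2]
    conv_lhs => rw [← e]
    rw [map_add]
    apply Valuation.map_add_eq_of_lt_left
    rw [h2]
    exact lt_of_le_of_lt ((V.valuation_le_one_iff _).2 (hVC _)) (one_lt_pow₀ hVX (by omega))

include hVC in
omit [CharZero K] in
lemma inv_mem_V [CharZero K] : (3125 : F)⁻¹ ∈ V ∧ (3125 : F) ≠ 0 := by
  have e : algebraMap (Polynomial K) F (Polynomial.C 3125) = 3125 := by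
    rw [map_ofNat, map_ofNat]
  have h1 : algebraMap (Polynomial K) F (Polynomial.C (3125)⁻¹) * 3125 = 1 := by
    rw [← e, ← map_mul, ← map_mul, inv_mul_cancel₀ (by norm_num)]; simp
  have h0 : (3125 : F) ≠ 0 := by
    intro h
    rw [h, mul_zero] at h1
    exact zero_ne_one h1
  refine ⟨?_, h0⟩
  rw [← eq_inv_of_mul_eq_one_left h1]
  exact hVC _

omit [CharZero K] [Algebra (Polynomial K) F] in
lemma nrm_ne_zero {p q : F} (h : ¬ (p = 0 ∧ q = 0)) : nrm V p q ≠ 0 := by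
  intro h0
  apply h
  have h1 : V.valuation p ≤ 0 := h0 ▸ le_max_left _ _
  have h2 : V.valuation q ≤ 0 := h0 ▸ le_max_right _ _
  simpa using And.intro h1 h2

omit [CharZero K] in
lemma PP_ne {p q r s : F} (h : PP hinj u v p q r s) : ¬ (p = 0 ∧ q = 0) := by
  rintro ⟨rfl, rfl⟩
  have := h.2.2
  simp at this

include hVC hVX hz hy hx in
lemma natnorm {p q r s : F} (h : PP hinj u v p q r s) :
    ∃ n : ℕ, nrm V p q ^ 60 = V.valuation (algebraMap (Polynomial K) F Polynomial.X) ^ n := by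
  obtain ⟨⟨c0, h0⟩, -, ⟨c2, h2⟩, -⟩ := PP_vals hinj hz hy hx h
  have hne := PP_ne hinj h
  have hn0 := nrm_ne_zero (V := V) hne
  obtain ⟨i1, i2⟩ := inv_mem_V (K := K) hVC
  rcases nrm_le V i1 i2 p q hne with h | h
  · rw [← h0] at h
    have : c0 ≠ 0 := by
      rintro rfl
      rw [map_zero, map_zero] at h
      exact hn0 (pow_eq_zero_iff (by norm_num) |>.1 h)
    refine ⟨c0.natDegree * 5, ?_⟩
    rw [pow_mul, ← val_poly hVC hVX _ c0 this rfl, ← h, ← pow_mul]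
  · rw [← h2] at h
    have : c2 ≠ 0 := by
      rintro rfl
      rw [map_zero, map_zero] at h
      exact hn0 (pow_eq_zero_iff (by norm_num) |>.1 h)
    refine ⟨c2.natDegree * 3, ?_⟩
    rw [pow_mul, ← val_poly hVC hVX _ c2 this rfl, ← h, ← pow_mul]

omit [CharZero K] in
include hVC hVX in
lemma reduce_aux {p q r s ρ e1 e2 w : F} (a : K) (ha : a ≠ 0) (c0 c1 : Polynomial K) (D : ℕ)
    (hN : 1 ≤ nrm V p q) (hNM : nrm V p q ≤ nrm V r s) (hM : 1 < nrm V r s)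
    (hr : r = ρ * p + e1) (hs : s = ρ * q + e2) (he1 : V.valuation e1 ≤ 1)
    (he2 : V.valuation e2 ≤ 1)
    (hc0 : nrm V p q ^ (D + 2) = V.valuation (algebraMap (Polynomial K) F c0))
    (hc1 : algebraMap (Polynomial K) F c1 =
      algebraMap (Polynomial K) F (Polynomial.C a) * ρ * algebraMap (Polynomial K) F c0 + w)
    (hw : V.valuation w ≤ nrm V p q ^ D) :
    ∃ g : Polynomial K, nrm V (r - algebraMap (Polynomial K) F g * p)
      (s - algebraMap (Polynomial K) F g * q) < nrm V r s := by
  have hNpos : 0 < nrm V p q := lt_of_lt_of_le zero_lt_one hN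
  have hc0ne : c0 ≠ 0 := by
    rintro rfl
    rw [map_zero, map_zero] at hc0
    exact (pow_pos hNpos _).ne' hc0
  set d := Polynomial.C a * c0 with hd
  have hdne : d ≠ 0 := mul_ne_zero (by simpa using ha) hc0ne
  have hvd : V.valuation (algebraMap (Polynomial K) F d) = nrm V p q ^ (D+2) := by
    rw [hd, map_mul, map_mul, val_C hVC ha, one_mul, hc0]
  set g := c1 / d
  set R := c1 % d
  have hdiv : d * g + R = c1 := EuclideanDomain.div_add_mod c1 d
  have hR : V.valuation (algebraMap (Polynomial K) F R) < nrm V p q ^ (D + 2) := by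
    by_cases hR0 : R = 0
    · rw [hR0, map_zero, map_zero]; exact pow_pos hNpos _
    · have hdeg : R.natDegree < d.natDegree :=
        Polynomial.natDegree_lt_natDegree hR0 (Polynomial.degree_mod_lt c1 hdne)
      rw [← hvd, val_poly hVC hVX _ R hR0 rfl, val_poly hVC hVX _ d hdne rfl]
      exact pow_lt_pow_right₀ hVX hdeg
  have key : (ρ - algebraMap (Polynomial K) F g) * algebraMap (Polynomial K) F d =
      algebraMap (Polynomial K) F R - w := by
    have := congrArg (algebraMap (Polynomial K) F) hdiv
    rw [map_add, map_mul, hc1] at this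
    rw [hd] at this ⊢
    rw [map_mul] at this ⊢
    linear_combination -this
  have hv : V.valuation (ρ - algebraMap (Polynomial K) F g) * nrm V p q ^ (D+2) ≤
      max (V.valuation (algebraMap (Polynomial K) F R)) (V.valuation w) := by
    rw [← hvd, ← map_mul, key]
    exact Valuation.map_sub _ _ _
  have hlt : V.valuation (ρ - algebraMap (Polynomial K) F g) * nrm V p q < nrm V r s := by
    rcases hN.eq_or_lt with h1 | h1
    · rw [← h1] at hv hw hR ⊢
      simp only [one_pow, mul_one] at hv hw hR ⊢
      exact lt_of_le_of_lt (hv.trans (max_le hR.le hw)) hM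
    · have : V.valuation (ρ - algebraMap (Polynomial K) F g) * nrm V p q ^ (D+2) <
          1 * nrm V p q ^ (D+2) := by
        rw [one_mul]
        refine lt_of_le_of_lt hv (max_lt hR (lt_of_le_of_lt hw ?_))
        exact pow_lt_pow_right₀ h1 (by omega)
      have h2 : V.valuation (ρ - algebraMap (Polynomial K) F g) < 1 :=
        lt_of_mul_lt_mul_right this zero_le
      refine lt_of_lt_of_le ?_ hNM
      calc _ < 1 * nrm V p q := mul_lt_mul_of_pos_right h2 hNpos
        _ = _ := one_mul _
  refine ⟨g, ?_⟩
  have f1 : r - algebraMap (Polynomial K) F g * p = (ρ - algebraMap (Polynomial K) F g) * p + e1 := by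
    rw [hr]; ring
  have f2 : s - algebraMap (Polynomial K) F g * q = (ρ - algebraMap (Polynomial K) F g) * q + e2 := by
    rw [hs]; ring
  rw [f1, f2]
  apply max_lt
  · refine Valuation.map_add_lt _ ?_ (lt_of_le_of_lt he1 hM)
    rw [map_mul]
    exact lt_of_le_of_lt (mul_le_mul_right (le_max_left _ _) _) hlt
  · refine Valuation.map_add_lt _ ?_ (lt_of_le_of_lt he2 hM)
    rw [map_mul]
    exact lt_of_le_of_lt (mul_le_mul_right (le_max_right _ _) _) hlt

include hVC hVX hz hy hx in
lemma reduce {p q r s : F} (h : PP hinj u v p q r s)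
    (hN : 1 ≤ nrm V p q) (hNM : nrm V p q ≤ nrm V r s) (hM : 1 < nrm V r s) :
    ∃ g : Polynomial K, nrm V (r - algebraMap (Polynomial K) F g * p)
      (s - algebraMap (Polynomial K) F g * q) < nrm V r s := by
  have hNpos : 0 < nrm V p q := lt_of_lt_of_le zero_lt_one hN
  have hne := PP_ne hinj h
  obtain ⟨⟨c0, h0⟩, ⟨c1, h1⟩, ⟨c2, h2⟩, ⟨c3, h3⟩⟩ := PP_vals hinj hz hy hx h
  obtain ⟨i1, i2⟩ := inv_mem_V (K := K) hVC
  obtain ⟨-, -, b1, b2, b3, b4⟩ := nrm_bounds V p q hne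
  have hdet := h.2.2
  have hdec : ∃ ρ e1 e2 : F, r = ρ * p + e1 ∧ s = ρ * q + e2 ∧
      V.valuation e1 * nrm V p q ≤ 1 ∧ V.valuation e2 * nrm V p q ≤ 1 := by
    rcases le_total (V.valuation p) (V.valuation q) with hle | hle
    · have hn : nrm V p q = V.valuation q := max_eq_right hle
      have hq : q ≠ 0 := by rintro rfl; rw [hn, map_zero] at hNpos; exact lt_irrefl _ hNpos
      refine ⟨s / q, -(1 / q), 0, ?_, ?_, ?_, ?_⟩
      · field_simp; linear_combination -hdet
      · field_simp; simp
      · rw [hn, ← map_mul, Valuation.map_mul, Valuation.map_neg, ← map_mul]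
        field_simp; simp
      · simp
    · have hn : nrm V p q = V.valuation p := max_eq_left hle
      have hq : p ≠ 0 := by rintro rfl; rw [hn, map_zero] at hNpos; exact lt_irrefl _ hNpos
      refine ⟨r / p, 0, (1 / p), ?_, ?_, ?_, ?_⟩
      · field_simp; simp
      · field_simp; linear_combination hdet
      · simp
      · rw [hn, ← map_mul]
        field_simp; simp
  obtain ⟨ρ, e1, e2, hr, hs, he1, he2⟩ := hdec
  have he1' : V.valuation e1 ≤ 1 := le_trans (le_mul_of_one_le_right' hN) he1
  have he2' : V.valuation e2 ≤ 1 := le_trans (le_mul_of_one_le_right' hN) he2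
  have hb : ∀ (D : ℕ) (a e : F), V.valuation a ≤ nrm V p q ^ (D+1) → V.valuation e * nrm V p q ≤ 1 →
      V.valuation (a * e) ≤ nrm V p q ^ D := by
    intro D a e ha he
    rw [map_mul]
    calc _ ≤ nrm V p q ^ (D+1) * V.valuation e := mul_le_mul_left ha _
      _ = nrm V p q ^ D * (V.valuation e * nrm V p q) := by rw [pow_succ, mul_assoc, mul_comm (nrm V p q)]
      _ ≤ _ := mul_le_of_le_one_right' he
  rcases nrm_le V i1 i2 p q hne with hh | hh
  · refine reduce_aux hVC hVX (w := kfu p q * e1 + kfv p q * e2) 12 (by norm_num) c0 c1 10 hN hNM hM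
      hr hs he1' he2' (by rw [h0]; exact hh) ?_ ?_
    · rw [h0, h1, map_ofNat, map_ofNat, hr, hs]
      linear_combination ρ * euler_f p q
    · exact Valuation.map_add_le _ (hb 10 _ _ b1 he1) (hb 10 _ _ b2 he2)
  · refine reduce_aux hVC hVX (w := kHu p q * e1 + kHv p q * e2) 20 (by norm_num) c2 c3 18 hN hNM hM
      hr hs he1' he2' (by rw [h2]; exact hh) ?_ ?_
    · rw [h2, h3, map_ofNat, map_ofNat, hr, hs]
      linear_combination ρ * euler_H p q
    · exact Valuation.map_add_le _ (hb 18 _ _ b3 he1) (hb 18 _ _ b4 he2)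

omit [CharZero K] [Algebra (Polynomial K) F] in
lemma nrm_neg (p q : F) : nrm V (-p) (-q) = nrm V p q := by simp [nrm, Valuation.map_neg]

include hVC hVX hz hy hx in
lemma descend : ∀ (N n1 n2 : ℕ) (p q r s : F), n1 + n2 = N → PP hinj u v p q r s →
    nrm V p q ^ 60 = V.valuation (algebraMap (Polynomial K) F Polynomial.X) ^ n1 →
    nrm V r s ^ 60 = V.valuation (algebraMap (Polynomial K) F Polynomial.X) ^ n2 →
    ∃ p q r s : F, PP hinj u v p q r s ∧ nrm V p q = 1 ∧ nrm V r s = 1 := by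
  intro N
  induction N using Nat.strong_induction_on with
  | _ N ih =>
  have main : ∀ (n1 n2 : ℕ) (p q r s : F), n1 + n2 = N → n1 ≤ n2 → PP hinj u v p q r s →
    nrm V p q ^ 60 = V.valuation (algebraMap (Polynomial K) F Polynomial.X) ^ n1 →
    nrm V r s ^ 60 = V.valuation (algebraMap (Polynomial K) F Polynomial.X) ^ n2 →
    ∃ p q r s : F, PP hinj u v p q r s ∧ nrm V p q = 1 ∧ nrm V r s = 1 := by
    intro n1 n2 p q r s hN hle hPP h1 h2
    by_cases hn2 : n2 = 0
    · subst hn2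
      obtain rfl : n1 = 0 := by omega
      rw [pow_zero] at h1 h2
      exact ⟨p, q, r, s, hPP, (pow_eq_one_iff.1 h1).resolve_right (by norm_num),
        (pow_eq_one_iff.1 h2).resolve_right (by norm_num)⟩
    have g1 : 1 ≤ nrm V p q := by
      rw [← one_le_pow_iff (n := 60) (by norm_num), h1]
      exact one_le_pow₀ hVX.le
    have g2 : nrm V p q ≤ nrm V r s := by
      rw [← pow_le_pow_iff_left₀ zero_le zero_le (n := 60) (by norm_num), h1, h2]
      exact pow_le_pow_right₀ hVX.le hle
    have g3 : 1 < nrm V r s := by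
      rw [← one_lt_pow_iff (n := 60) (by norm_num), h2]
      exact one_lt_pow₀ hVX hn2
    obtain ⟨g, hg⟩ := reduce hinj hz hy hx hVC hVX hPP g1 g2 g3
    have hPP' := PP_shift hinj hPP g
    obtain ⟨n3, h3⟩ := natnorm hinj hz hy hx hVC hVX (PP_swap hinj hPP')
    have : n3 < n2 := by
      rw [← pow_lt_pow_iff_right₀ hVX, ← h3, ← h2]
      exact pow_lt_pow_left₀ hg zero_le (by norm_num)
    exact ih (n1 + n3) (by omega) n1 n3 _ _ _ _ rfl hPP' h1 h3
  intro n1 n2 p q r s hN hPP h1 h2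
  rcases le_total n1 n2 with h | h
  · exact main n1 n2 p q r s hN h hPP h1 h2
  · exact main n2 n1 r s (-p) (-q) (by omega) h (PP_swap hinj hPP) h2 (by rw [nrm_neg, h1])

include hinj hz hy hx in
theorem core (hK : ∀ e : F, ((algebraMap (Polynomial K) F).comp Polynomial.C).IsIntegralElem e →
      ∃ a : K, algebraMap (Polynomial K) F (Polynomial.C a) = e)
    (hcop : IsCoprime z y) (hz0 : z ≠ 0) :
    ∃ u' v' : Polynomial K, algebraMap (Polynomial K) F u' = u ∧ algebraMap (Polynomial K) F v' = v := by
  have hunit : IsUnit (3125 : Polynomial K) := by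
    have : (3125 : Polynomial K) = Polynomial.C 3125 := (map_ofNat Polynomial.C 3125).symm
    rw [this, Polynomial.isUnit_C]
    exact isUnit_iff_ne_zero.2 (by norm_num)
  obtain ⟨hui, hvi⟩ := integral_coords hunit u v (by rw [hz]; exact isIntegral_algebraMap)
    (by rw [hy]; exact isIntegral_algebraMap)
  have huv : MM hinj u v u v := ⟨hui, hvi, 1, one_mem _, 0, zero_mem _, by ring, by ring⟩
  have hcs : ∀ n : ℕ, ((n : K)) ≠ 0 → algebraMap (Polynomial K) F (Polynomial.C (n:K)⁻¹) * (n : F) = 1 := by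
    intro n hn
    have e : algebraMap (Polynomial K) F (Polynomial.C (n:K)) = n := by simp
    rw [← e, ← map_mul, ← map_mul, inv_mul_cancel₀ hn]; simp
  have h12 := hcs 12 (by norm_num)
  have h20 := hcs 20 (by norm_num)
  have h3 := hcs 3 (by norm_num)
  push_cast at h12 h20 h3
  have h3ne : (3 : F) ≠ 0 := by intro h; rw [h, mul_zero] at h3; exact zero_ne_one h3
  have hz0' : algebraMap (Polynomial K) F z ≠ 0 := by
    rw [Ne, map_eq_zero_iff _ hinj]; exact hz0
  obtain ⟨a, b, hab⟩ := hcop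
  set α : Polynomial K := -(Polynomial.C ((12:K)⁻¹) * a) with hα
  set γ : Polynomial K := -(Polynomial.C ((20:K)⁻¹) * b) with hγ
  have hab' := congrArg (algebraMap (Polynomial K) F) hab
  simp only [map_add, map_mul, map_one] at hab'
  have hdet1 : -12 * (algebraMap (Polynomial K) F α * algebraMap (Polynomial K) F z)
      - 20 * (algebraMap (Polynomial K) F γ * algebraMap (Polynomial K) F y) = 1 := by
    rw [hα, hγ, map_neg, map_neg, map_mul, map_mul]
    linear_combination hab' + algebraMap (Polynomial K) F a * algebraMap (Polynomial K) F z * h12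
      + algebraMap (Polynomial K) F b * algebraMap (Polynomial K) F y * h20
  clear_value α γ
  have ofn : ∀ n : ℕ, IsIntegral (Polynomial K) (n : F) := fun n => by
    have : (n : F) = algebraMap (Polynomial K) F n := by simp
    rw [this]; exact isIntegral_algebraMap
  have iA : ∀ w : Polynomial K, IsIntegral (Polynomial K) (algebraMap (Polynomial K) F w) :=
    fun w => isIntegral_algebraMap
  let O := integralClosure (Polynomial K) F
  have ifu : IsIntegral (Polynomial K) (kfu u v) := by
    have := map_kfu O.val.toRingHom ⟨u, hui⟩ ⟨v, hvi⟩
    have h2 := (kfu (⟨u, hui⟩ : O) ⟨v, hvi⟩).2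
    exact this ▸ h2
  have ifv : IsIntegral (Polynomial K) (kfv u v) := by
    have := map_kfv O.val.toRingHom ⟨u, hui⟩ ⟨v, hvi⟩
    have h2 := (kfv (⟨u, hui⟩ : O) ⟨v, hvi⟩).2
    exact this ▸ h2
  have iHu : IsIntegral (Polynomial K) (kHu u v) := by
    have := map_kHu O.val.toRingHom ⟨u, hui⟩ ⟨v, hvi⟩
    have h2 := (kHu (⟨u, hui⟩ : O) ⟨v, hvi⟩).2
    exact this ▸ h2
  have iHv : IsIntegral (Polynomial K) (kHv u v) := by
    have := map_kHv O.val.toRingHom ⟨u, hui⟩ ⟨v, hvi⟩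
    have h2 := (kHv (⟨u, hui⟩ : O) ⟨v, hvi⟩).2
    exact this ▸ h2
  have eHv := Hv_id u v
  have eHu := Hu_id u v
  rw [hz, hy, hx] at eHv eHu
  have m1 : ∀ w : Polynomial K, algebraMap (Polynomial K) F w ∈ LL hinj := mem_LL_base hinj
  have hfrac : ∀ w : Polynomial K, 5 * algebraMap (Polynomial K) F w /
      (3 * algebraMap (Polynomial K) F z) ∈ LL hinj := fun w =>
    div_mem (mul_mem (ofNat_mem _ 5) (m1 w)) (mul_mem (ofNat_mem _ 3) (m1 z))
  have hm2 : MM hinj u v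
      (algebraMap (Polynomial K) F α * kfv u v + algebraMap (Polynomial K) F γ * kHv u v)
      (algebraMap (Polynomial K) F α * (-kfu u v) + algebraMap (Polynomial K) F γ * (-kHu u v)) := by
    refine ⟨((iA α).mul ifv).add ((iA γ).mul iHv), ((iA α).mul ifu.neg).add ((iA γ).mul iHu.neg),
      algebraMap (Polynomial K) F γ * (5 * algebraMap (Polynomial K) F x /
        (3 * algebraMap (Polynomial K) F z)), mul_mem (m1 γ) (hfrac x),
      algebraMap (Polynomial K) F α + algebraMap (Polynomial K) F γ *
        (5 * algebraMap (Polynomial K) F y / (3 * algebraMap (Polynomial K) F z)),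
      add_mem (m1 α) (mul_mem (m1 γ) (hfrac y)), ?_, ?_⟩
    · field_simp
      linear_combination algebraMap (Polynomial K) F γ * eHv
    · field_simp
      linear_combination algebraMap (Polynomial K) F γ * eHu
  have hPP0 : PP hinj u v u v _ _ := ⟨huv, hm2, by
    have e1 := euler_f u v
    have e2 := euler_H u v
    rw [hz] at e1
    rw [hy] at e2
    linear_combination hdet1 - algebraMap (Polynomial K) F α * e1 - algebraMap (Polynomial K) F γ * e2⟩
  obtain ⟨V, hVC, hVX⟩ := exists_val hinj
  obtain ⟨n1, hn1⟩ := natnorm hinj hz hy hx hVC hVX hPP0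
  obtain ⟨n2, hn2⟩ := natnorm hinj hz hy hx hVC hVX (PP_swap hinj hPP0)
  obtain ⟨p, q, r, s, hPP, hp1, hr1⟩ := descend hinj hz hy hx hVC hVX _ n1 n2 _ _ _ _ rfl hPP0 hn1 hn2
  letI : Algebra K F := ((algebraMap (Polynomial K) F).comp Polynomial.C).toAlgebra
  have hunitK : IsUnit (3125 : K) := isUnit_iff_ne_zero.2 (by norm_num)
  have hconst : ∀ g : Polynomial K, V.valuation (algebraMap (Polynomial K) F g) ≤ 1 →
      IsIntegral K (algebraMap (Polynomial K) F g) := by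
    intro g hg
    by_cases h0 : g = 0
    · rw [h0, map_zero]; exact isIntegral_zero
    have hdeg : g.natDegree = 0 := by
      by_contra hd
      rw [val_poly hVC hVX _ g h0 rfl] at hg
      exact absurd (one_lt_pow₀ hVX hd) (not_lt.2 hg)
    obtain ⟨c, rfl⟩ := Polynomial.natDegree_eq_zero.1 hdeg
    exact isIntegral_algebraMap (R := K) (x := c)
  have hcoord : ∀ p q r s : F, PP hinj u v p q r s → nrm V p q = 1 →
      (∃ c : Polynomial K, algebraMap (Polynomial K) F c = p) ∧
      (∃ c : Polynomial K, algebraMap (Polynomial K) F c = q) := by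
    intro p q r s hPP hn
    obtain ⟨⟨c0, h0⟩, -, ⟨c2, h2⟩, -⟩ := PP_vals hinj hz hy hx hPP
    obtain ⟨b1, b2, -⟩ := nrm_bounds V p q (PP_ne hinj hPP)
    rw [hn, one_pow] at b1 b2
    obtain ⟨j1, j2⟩ := integral_coords hunitK p q (h0 ▸ hconst c0 (h0 ▸ b1)) (h2 ▸ hconst c2 (h2 ▸ b2))
    obtain ⟨a1, h1⟩ := hK p j1
    obtain ⟨a2, h2⟩ := hK q j2
    exact ⟨⟨_, h1⟩, ⟨_, h2⟩⟩
  obtain ⟨⟨p', hp'⟩, ⟨q', hq'⟩⟩ := hcoord p q r s hPP hp1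
  obtain ⟨⟨r', hr'⟩, ⟨s', hs'⟩⟩ := hcoord r s _ _ (PP_swap hinj hPP) hr1
  have hdet := hPP.2.2
  obtain ⟨⟨ip, iq, X1, hX1, Y1, hY1, e1, e2⟩, ⟨ir, is, X2, hX2, Y2, hY2, e3, e4⟩, -⟩ := hPP
  have ef := euler_f u v
  rw [hz] at ef
  obtain ⟨A, hA⟩ := mem_range_of_LL hinj (e := u * s - v * r) (by
    have : u * s - v * r = - (Y2 * (12 * algebraMap (Polynomial K) F z)) := by
      rw [e3, e4]; linear_combination -Y2 * ef
    rw [this]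
    exact neg_mem (mul_mem hY2 (mul_mem (ofNat_mem _ 12) (m1 z)))) ((hui.mul is).sub (hvi.mul ir))
  obtain ⟨A', hA'⟩ := mem_range_of_LL hinj (e := p * v - q * u) (by
    have : p * v - q * u = (Y1 * (12 * algebraMap (Polynomial K) F z)) := by
      rw [e1, e2]; linear_combination Y1 * ef
    rw [this]
    exact (mul_mem hY1 (mul_mem (ofNat_mem _ 12) (m1 z)))) ((ip.mul hvi).sub (iq.mul hui))
  refine ⟨A * p' + A' * r', A * q' + A' * s', ?_, ?_⟩
  · rw [map_add, map_mul, map_mul, hA, hA', hp', hr']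
    linear_combination u * hdet
  · rw [map_add, map_mul, map_mul, hA, hA', hq', hs']
    linear_combination v * hdet

end core2
end
end E8

namespace E8
noncomputable section

open PowerSeries in
lemma adic_complete (K : Type*) [Field K] :
    IsAdicComplete (Ideal.span {(PowerSeries.X : PowerSeries K)}) (PowerSeries K) where
  haus' := by
    intro w hw
    ext n
    have := hw (n+1)
    rw [SModEq.zero, smul_eq_mul, Ideal.mul_top, Ideal.span_singleton_pow,
      Ideal.mem_span_singleton, PowerSeries.X_pow_dvd_iff] at this
    rw [this n (by omega), map_zero]
  prec' := by
    intro f hf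
    refine ⟨PowerSeries.mk fun n => PowerSeries.coeff n (f (n+1)), fun n => ?_⟩
    rw [SModEq.sub_mem, smul_eq_mul, Ideal.mul_top, Ideal.span_singleton_pow,
      Ideal.mem_span_singleton, PowerSeries.X_pow_dvd_iff]
    intro m hm
    have := hf (m := m+1) (n := n) (by omega)
    rw [SModEq.sub_mem, smul_eq_mul, Ideal.mul_top, Ideal.span_singleton_pow,
      Ideal.mem_span_singleton, PowerSeries.X_pow_dvd_iff] at this
    have h2 := this m (by omega)
    rw [map_sub, sub_eq_zero] at h2
    rw [map_sub, PowerSeries.coeff_mk, h2, sub_self]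

lemma hensel_ps {K : Type*} [Field K] (P : Polynomial (PowerSeries K)) (hP : P.Monic) (a : K)
    (h0 : PowerSeries.constantCoeff (P.eval (PowerSeries.C a)) = 0)
    (h1 : PowerSeries.constantCoeff (P.derivative.eval (PowerSeries.C a)) ≠ 0) :
    ∃ s : PowerSeries K, P.eval s = 0 ∧ PowerSeries.constantCoeff s = a := by
  have := adic_complete K
  obtain ⟨s, hs, hs'⟩ := HenselianRing.is_henselian (I := Ideal.span {(PowerSeries.X : PowerSeries K)})
    P hP (PowerSeries.C a) (by
      rw [Ideal.mem_span_singleton, PowerSeries.X_dvd_iff]; exact h0)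
    (by
      apply IsUnit.map
      rw [PowerSeries.isUnit_iff_constantCoeff]
      exact isUnit_iff_ne_zero.2 h1)
  refine ⟨s, hs, ?_⟩
  rw [Ideal.mem_span_singleton, PowerSeries.X_dvd_iff, map_sub, PowerSeries.constantCoeff_C, sub_eq_zero] at hs'
  exact hs'

/-- the Hensel polynomial -/
def hP {R : Type*} [CommRing R] (κ : R) : Polynomial R :=
  (-(kH 1 Polynomial.X))^3 + Polynomial.C κ * (kf 1 Polynomial.X)^5

lemma kH_monic {R : Type*} [CommRing R] [Nontrivial R] :
    (-(kH (1 : Polynomial R) Polynomial.X)).Monic ∧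
    (-(kH (1 : Polynomial R) Polynomial.X)).natDegree = 20 := by
  have h : (-(kH (1 : Polynomial R) Polynomial.X)) = Polynomial.X ^ 20 +
      (1 + 494 * Polynomial.X^10 + 228 * (Polynomial.X^15 - Polynomial.X ^ 5)) := by
    simp only [kH]; ring
  have hd : (1 + 494 * Polynomial.X^10 + 228 * (Polynomial.X^15 - Polynomial.X ^ 5) :
      Polynomial R).natDegree ≤ 15 := by compute_degree
  have hm : (-(kH (1 : Polynomial R) Polynomial.X)).Monic := by
    rw [h]
    apply Polynomial.monic_X_pow_add
    refine lt_of_le_of_lt (Polynomial.degree_le_of_natDegree_le hd) ?_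
    exact_mod_cast (by norm_num : 15 < 20)
  refine ⟨hm, ?_⟩
  rw [h, Polynomial.natDegree_add_eq_left_of_natDegree_lt] <;> rw [Polynomial.natDegree_X_pow]
  omega

lemma kf_natDegree {R : Type*} [CommRing R] :
    (kf (1 : Polynomial R) Polynomial.X).natDegree ≤ 11 := by
  simp only [kf]
  compute_degree

lemma hP_monic {R : Type*} [CommRing R] [Nontrivial R] (κ : R) :
    (hP κ).Monic ∧ (hP κ).natDegree = 60 := by
  obtain ⟨hm, hd⟩ := kH_monic (R := R)
  have h3 : ((-(kH (1 : Polynomial R) Polynomial.X))^3).natDegree = 60 := by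
    rw [hm.natDegree_pow, hd]
  have h5 : (Polynomial.C κ * (kf 1 Polynomial.X)^5).natDegree ≤ 55 := by
    refine (Polynomial.natDegree_C_mul_le _ _).trans (Polynomial.natDegree_pow_le.trans ?_)
    have := kf_natDegree (R := R)
    omega
  have hlt : (Polynomial.C κ * (kf 1 Polynomial.X)^5).natDegree <
      ((-(kH (1 : Polynomial R) Polynomial.X))^3).natDegree := by omega
  constructor
  · apply Polynomial.Monic.add_of_left (hm.pow 3)
    exact Polynomial.degree_lt_degree hlt
  · rw [hP, Polynomial.natDegree_add_eq_left_of_natDegree_lt hlt, h3]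

lemma eval_hP {R : Type*} [CommRing R] (κ s : R) :
    (hP κ).eval s = - kH 1 s ^ 3 + κ * kf 1 s ^ 5 := by
  have h1 := map_kf (Polynomial.evalRingHom s) 1 Polynomial.X
  have h2 := map_kH (Polynomial.evalRingHom s) 1 Polynomial.X
  simp only [Polynomial.coe_evalRingHom, Polynomial.eval_one, Polynomial.eval_X] at h1 h2
  simp only [hP, Polynomial.eval_add, Polynomial.eval_mul, Polynomial.eval_pow, Polynomial.eval_neg,
    Polynomial.eval_C, h1, h2]
  ring

lemma eval_der_hP {R : Type*} [CommRing R] (κ s : R) :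
    (hP κ).derivative.eval s =
      - (3 * kH 1 s ^ 2 * kHv 1 s) + κ * (5 * kf 1 s ^ 4 * kfv 1 s) := by
  have h1 : (kf (1 : Polynomial R) Polynomial.X).derivative = kfv 1 Polynomial.X := by
    simp only [kf, kfv]
    simp [map_ofNat]
    ring
  have h2 : (kH (1 : Polynomial R) Polynomial.X).derivative = kHv 1 Polynomial.X := by
    simp only [kH, kHv]
    simp [map_ofNat]
    ring
  have e1 := map_kf (Polynomial.evalRingHom s) 1 Polynomial.X
  have e2 := map_kH (Polynomial.evalRingHom s) 1 Polynomial.X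
  have e3 := map_kfv (Polynomial.evalRingHom s) 1 Polynomial.X
  have e4 := map_kHv (Polynomial.evalRingHom s) 1 Polynomial.X
  simp only [Polynomial.coe_evalRingHom, Polynomial.eval_one, Polynomial.eval_X] at e1 e2 e3 e4
  simp only [hP, Polynomial.derivative_add, Polynomial.derivative_mul, Polynomial.derivative_pow,
    Polynomial.derivative_neg, Polynomial.derivative_C, h1, h2, Polynomial.eval_add, Polynomial.eval_mul,
    Polynomial.eval_pow, Polynomial.eval_neg, Polynomial.eval_C, e1, e2, e3, e4]
  simp

theorem hensel_main {k K : Type*} [Field k] [Field K] [CharZero K] [IsAlgClosed k] [CharZero k] [Algebra k K]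
    {x y z : PowerSeries K} (hrel : x^2 + y^3 = 1728 * z^5) {x0 y0 z0 : k}
    (hx0 : x0 ≠ 0) (hy0 : y0 ≠ 0) (hz0 : z0 ≠ 0)
    (hx : PowerSeries.constantCoeff x = algebraMap k K x0)
    (hy : PowerSeries.constantCoeff y = algebraMap k K y0)
    (hz : PowerSeries.constantCoeff z = algebraMap k K z0) :
    ∃ u v : PowerSeries K, kf u v = z ∧ kH u v = y ∧ kT u v = x := by
  have inj : Function.Injective (algebraMap k K) := (algebraMap k K).injective
  have hrel0 : x0^2 + y0^3 = 1728 * z0^5 := by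
    apply inj
    have := congrArg PowerSeries.constantCoeff hrel
    simpa [hx, hy, hz, map_ofNat] using this
  -- solve over k
  obtain ⟨s0, hs0⟩ := IsAlgClosed.exists_root (hP (y0^3 / z0^5)) (by
    rw [Polynomial.degree_eq_natDegree (hP_monic _).1.ne_zero, (hP_monic _).2]; norm_num)
  rw [Polynomial.IsRoot, eval_hP] at hs0
  have hcert := cert_u 1 s0
  have hf0 : kf 1 s0 ≠ 0 := by
    intro h
    rw [h] at hs0 hcert
    have : kH 1 s0 = 0 := by simpa using hs0
    rw [this] at hcert
    simp at hcert
  have hH0 : kH 1 s0 ≠ 0 := by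
    intro h
    rw [h] at hs0
    simp [hy0, hz0, hf0] at hs0
  have hkl := klein 1 s0
  have hlam : kT 1 s0 ^ 2 * z0^5 = x0^2 * kf 1 s0^5 := by
    have e : kH 1 s0 ^ 3 * z0^5 = y0^3 * kf 1 s0 ^5 := by
      field_simp at hs0
      linear_combination -hs0
    linear_combination z0^5 * hkl - kf 1 s0 ^ 5 * hrel0 - e
  have hT0 : kT 1 s0 ≠ 0 := by
    intro h
    rw [h] at hlam
    have : x0^2 * kf 1 s0^5 ≠ 0 := mul_ne_zero (pow_ne_zero _ hx0) (pow_ne_zero _ hf0)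
    apply this
    rw [← hlam]; ring
  have hder0 : - (3 * kH 1 s0 ^ 2 * kHv 1 s0) + (y0^3/z0^5) * (5 * kf 1 s0 ^ 4 * kfv 1 s0) ≠ 0 := by
    intro h
    have e := Hv_id 1 s0
    have : kH 1 s0 ^ 2 * (5 * kT 1 s0) = 0 := by
      linear_combination (-kf 1 s0) * h + 5 * kfv 1 s0 * hs0 - kH 1 s0 ^ 2 * e
    have hne : kH 1 s0 ^ 2 * (5 * kT 1 s0) ≠ 0 :=
      mul_ne_zero (pow_ne_zero _ hH0) (mul_ne_zero (by norm_num) hT0)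
    exact hne this
  -- lift
  have hzc : PowerSeries.constantCoeff z ≠ 0 := by rw [hz]; simpa using hz0
  have hyc : PowerSeries.constantCoeff y ≠ 0 := by rw [hy]; simpa using hy0
  have hxc : PowerSeries.constantCoeff x ≠ 0 := by rw [hx]; simpa using hx0
  have hκ : PowerSeries.constantCoeff (y^3 * (z⁻¹)^5) = algebraMap k K (y0^3 / z0^5) := by
    simp [hy, hz, div_eq_mul_inv]
  obtain ⟨s, hs, hsc⟩ := hensel_ps (hP (y^3 * (z⁻¹)^5)) (hP_monic _).1 (algebraMap k K s0) (by
    rw [eval_hP, map_add, map_mul, hκ, map_neg, map_pow, map_pow, map_kH, map_kf, map_one,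
      PowerSeries.constantCoeff_C, ← map_one (algebraMap k K), ← map_kH, ← map_kf, ← map_pow,
      ← map_neg, ← map_pow, ← map_mul, ← map_add, hs0, map_zero]) (by
    rw [eval_der_hP]
    simp only [map_add, map_mul, hκ, map_neg, map_pow, map_kH, map_kf, map_kfv, map_kHv, map_one,
      PowerSeries.constantCoeff_C, map_ofNat]
    rw [← map_one (algebraMap k K), ← map_kH, ← map_kf, ← map_kHv, ← map_kfv]
    intro h
    apply hder0
    apply inj
    rw [map_zero, ← h]
    simp [map_ofNat])
  rw [eval_hP] at hs
  have hzi : z * z⁻¹ = 1 := PowerSeries.mul_inv_cancel z hzc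
  have cf : PowerSeries.constantCoeff (kf 1 s) = algebraMap k K (kf 1 s0) := by
    rw [map_kf, map_kf, hsc, map_one, map_one]
  have cH : PowerSeries.constantCoeff (kH 1 s) = algebraMap k K (kH 1 s0) := by
    rw [map_kH, map_kH, hsc, map_one, map_one]
  have cT : PowerSeries.constantCoeff (kT 1 s) = algebraMap k K (kT 1 s0) := by
    rw [map_kT, map_kT, hsc, map_one, map_one]
  have cf0 : PowerSeries.constantCoeff (kf 1 s) ≠ 0 := by rw [cf]; simpa using hf0
  have cH0 : PowerSeries.constantCoeff (kH 1 s) ≠ 0 := by rw [cH]; simpa using hH0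
  have cT0 : PowerSeries.constantCoeff (kT 1 s) ≠ 0 := by rw [cT]; simpa using hT0
  set φ := kf 1 s with hφ
  set η := kH 1 s with hη
  set θ := kT 1 s with hθ
  have e1 : η^3 * z^5 = y^3 * φ^5 := by
    have hzi5 : z^5 * (z⁻¹)^5 = 1 := by rw [← mul_pow, hzi, one_pow]
    linear_combination (-z^5) * hs + y^3 * φ^5 * hzi5
  have hkl' : θ^2 + η^3 = 1728 * φ^5 := klein 1 s
  have e2 : θ^2 * z^5 = x^2 * φ^5 := by
    linear_combination z^5 * hkl' - φ^5 * hrel - e1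
  -- square root
  obtain ⟨d0, hd0⟩ := IsAlgClosed.exists_pow_nat_eq (z0 * y0 * kT 1 s0 / (kf 1 s0 * kH 1 s0 * x0))
    (n := 2) (by norm_num)
  have hd00 : d0 ≠ 0 := by
    rintro rfl
    have : z0 * y0 * kT 1 s0 / (kf 1 s0 * kH 1 s0 * x0) ≠ 0 := by
      apply div_ne_zero
      · exact mul_ne_zero (mul_ne_zero hz0 hy0) hT0
      · exact mul_ne_zero (mul_ne_zero hf0 hH0) hx0
    apply this
    rw [← hd0]; ring
  set U := z * y * θ * (φ⁻¹ * η⁻¹ * x⁻¹) with hU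
  have hUc : PowerSeries.constantCoeff U = algebraMap k K (d0^2) := by
    rw [hd0, hU]
    simp only [map_mul, PowerSeries.constantCoeff_inv, hx, hy, hz, cf, cH, cT, map_div₀]
    simp [div_eq_mul_inv, mul_comm, mul_left_comm, mul_assoc]
  obtain ⟨w, hw, hwc⟩ := hensel_ps (Polynomial.X^2 - Polynomial.C U)
    (Polynomial.monic_X_pow_sub_C U (by norm_num)) (algebraMap k K d0) (by simp [hUc])
    (by simp [map_ofNat]; exact hd00)
  have hw2 : w^2 = U := by simpa [sub_eq_zero] using hw
  have hφi : φ * φ⁻¹ = 1 := PowerSeries.mul_inv_cancel φ cf0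
  have hηi : η * η⁻¹ = 1 := PowerSeries.mul_inv_cancel η cH0
  have hxi : x * x⁻¹ = 1 := PowerSeries.mul_inv_cancel x hxc
  have hUr : w^2 * (φ * η * x) = z * y * θ := by
    rw [hw2, hU]
    calc _ = z * y * θ * ((φ * φ⁻¹) * (η * η⁻¹) * (x * x⁻¹)) := by ring
      _ = _ := by rw [hφi, hηi, hxi]; ring
  have nφ : φ ≠ 0 := by rintro h; rw [h] at cf0; simp at cf0
  have nη : η ≠ 0 := by rintro h; rw [h] at cH0; simp at cH0
  have nθ : θ ≠ 0 := by rintro h; rw [h] at cT0; simp at cT0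
  have nx : x ≠ 0 := by rintro h; rw [h] at hxc; simp at hxc
  have ny : y ≠ 0 := by rintro h; rw [h] at hyc; simp at hyc
  have nz : z ≠ 0 := by rintro h; rw [h] at hzc; simp at hzc
  clear_value φ η θ U
  have e3 : η^3 * x^2 = y^3 * θ^2 := by
    apply mul_left_cancel₀ (pow_ne_zero 5 nz)
    linear_combination x^2 * e1 - y^3 * e2
  have r1 : w^12 * φ = z := by
    have : (φ * η * x)^6 * (w^12 * φ) = (φ * η * x)^6 * z := by
      have : (φ * η * x)^6 * (w^12 * φ) = (z * y * θ)^6 * φ := by rw [← hUr]; ring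
      rw [this]
      have h1 : (y^3*θ^2)^2 = (η^3 * x^2)^2 := by rw [e3]
      calc _ = z * φ * (θ^2 * z^5) * ((y^3*θ^2)^2) := by ring
        _ = _ := by rw [h1, e2]; ring
    exact mul_left_cancel₀ (pow_ne_zero 6 (mul_ne_zero (mul_ne_zero nφ nη) nx)) this
  have r2 : w^20 * η = y := by
    have : (φ * η * x)^10 * (w^20 * η) = (φ * η * x)^10 * y := by
      have : (φ * η * x)^10 * (w^20 * η) = (z * y * θ)^10 * η := by rw [← hUr]; ring
      rw [this]
      calc _ = η * y * (θ^2 * z^5)^2 * ((y^3*θ^2)^3) := by ring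
        _ = _ := by rw [← e3, e2]; ring
    exact mul_left_cancel₀ (pow_ne_zero 10 (mul_ne_zero (mul_ne_zero nφ nη) nx)) this
  have r3 : w^30 * θ = x := by
    have : (φ * η * x)^15 * (w^30 * θ) = (φ * η * x)^15 * x := by
      have : (φ * η * x)^15 * (w^30 * θ) = (z * y * θ)^15 * θ := by rw [← hUr]; ring
      rw [this]
      calc _ = (θ^2 * z^5)^3 * ((y^3*θ^2)^5) := by ring
        _ = _ := by rw [← e3, e2]; ring
    exact mul_left_cancel₀ (pow_ne_zero 15 (mul_ne_zero (mul_ne_zero nφ nη) nx)) this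
  refine ⟨w, w * s, ?_, ?_, ?_⟩
  · have := kf_smul w 1 s
    rw [mul_one] at this
    rw [this, ← hφ, r1]
  · have := kH_smul w 1 s
    rw [mul_one] at this
    rw [this, ← hη, r2]
  · have : kT w (w * s) = w^30 * kT 1 s := by simp only [kT]; ring
    rw [this, ← hθ, r3]

lemma integral_const {K F : Type*} [Field K] [Field F] [Algebra (PowerSeries K) F]
    [IsFractionRing (PowerSeries K) F] (e : F)
    (he : ((algebraMap (PowerSeries K) F).comp (PowerSeries.C)).IsIntegralElem e) :
    ∃ a : K, algebraMap (PowerSeries K) F (PowerSeries.C a) = e := by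
  have h1 : IsIntegral (PowerSeries K) e := by
    obtain ⟨P, hP, hPe⟩ := he
    refine ⟨P.map PowerSeries.C, hP.map _, ?_⟩
    rw [Polynomial.eval₂_map]; exact hPe
  obtain ⟨w, rfl⟩ := IsIntegrallyClosed.isIntegral_iff.1 h1
  have h2 : IsIntegral K w := by
    obtain ⟨P, hP, hPe⟩ := he
    refine ⟨P, hP, ?_⟩
    rw [← Polynomial.hom_eval₂] at hPe
    exact (map_eq_zero_iff _ (IsFractionRing.injective (PowerSeries K) F)).1 hPe
  refine ⟨PowerSeries.constantCoeff w, ?_⟩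
  congr 1
  by_contra hne
  have h3 : IsIntegral K (w - algebraMap K (PowerSeries K) (PowerSeries.constantCoeff w)) :=
    h2.sub isIntegral_algebraMap
  have h4 := h3.isUnit (by
    intro h
    rw [sub_eq_zero] at h
    exact hne h.symm)
  rw [PowerSeries.isUnit_iff_constantCoeff] at h4
  simp [PowerSeries.algebraMap_apply] at h4

theorem klein_solve {k K : Type*} [Field k] [Field K] [CharZero K] [IsAlgClosed k] [CharZero k] [Algebra k K]
    {x y z : Polynomial K} (hrel : x^2 + y^3 = 1728 * z^5) (hcop : IsCoprime z y) {x0 y0 z0 : k}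
    (hx0 : x0 ≠ 0) (hy0 : y0 ≠ 0) (hz0 : z0 ≠ 0)
    (hx : x.coeff 0 = algebraMap k K x0)
    (hy : y.coeff 0 = algebraMap k K y0)
    (hz : z.coeff 0 = algebraMap k K z0) :
    ∃ u v : Polynomial K, kf u v = z ∧ kH u v = y := by
  let c := Polynomial.coeToPowerSeries.ringHom (R := K)
  have hrel' : (c x)^2 + (c y)^3 = 1728 * (c z)^5 := by
    rw [← map_pow, ← map_pow, ← map_pow, ← map_add, hrel, map_mul, map_ofNat]
  have hcc : ∀ g : Polynomial K, PowerSeries.constantCoeff (c g) = g.coeff 0 := fun g => by simp [c]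
  obtain ⟨u, v, h1, h2, h3⟩ := hensel_main (k := k) hrel' hx0 hy0 hz0 (by rw [hcc, hx])
    (by rw [hcc, hy]) (by rw [hcc, hz])
  let F := FractionRing (PowerSeries K)
  let j : PowerSeries K →+* F := algebraMap (PowerSeries K) F
  have hj : Function.Injective j := IsFractionRing.injective _ _
  letI : Algebra (Polynomial K) F := (j.comp c).toAlgebra
  have hinj : Function.Injective (algebraMap (Polynomial K) F) :=
    hj.comp (Polynomial.coe_injective K)
  obtain ⟨u', v', hu, hv⟩ := core (K := K) (F := F) hinj (u := j u) (v := j v) (x := x) (y := y) (z := z)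
    (by rw [← map_kf, h1]; rfl) (by rw [← map_kH, h2]; rfl) (by rw [← map_kT, h3]; rfl)
    (by
      intro e he
      have : (algebraMap (Polynomial K) F).comp Polynomial.C = j.comp (PowerSeries.C) := by
        ext a
        change j (c (Polynomial.C a)) = _
        simp [c]
      rw [this] at he
      obtain ⟨a, ha⟩ := integral_const e he
      refine ⟨a, ?_⟩
      rw [← ha]
      exact RingHom.congr_fun this a) hcop (by rintro rfl; simp at hz; exact hz0 ((map_eq_zero _).1 hz.symm))
  refine ⟨u', v', ?_, ?_⟩
  · apply hinj
    rw [map_kf, hu, hv, ← map_kf, h1]; rfl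
  · apply hinj
    rw [map_kH, hu, hv, ← map_kH, h2]; rfl

end
end E8

namespace E8
noncomputable section
open MvPolynomial

section emb
variable {k : Type*} [Field k] {n : ℕ}

/-- the weighted substitution -/
def i0 : MvPolynomial (Fin (n+1)) k →+* Polynomial (MvPolynomial (Fin n) k) :=
  eval₂Hom (Polynomial.C.comp C)
    (Fin.cons Polynomial.X (fun i => Polynomial.C (X i) * Polynomial.X) :
      Fin (n+1) → Polynomial (MvPolynomial (Fin n) k))

lemma i0_C (a : k) : i0 (n := n) (C a) = Polynomial.C (C a) := by simp [i0]
lemma i0_X0 : i0 (n := n) (X 0 : MvPolynomial (Fin (n+1)) k) = Polynomial.X := by simp [i0]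
lemma i0_Xs (i : Fin n) : i0 (n := n) (X i.succ : MvPolynomial (Fin (n+1)) k) =
    Polynomial.C (X i) * Polynomial.X := by simp [i0]

lemma i0_monomial (m : Fin (n+1) →₀ ℕ) (c : k) :
    i0 (monomial m c) = Polynomial.C (monomial m.tail c) * Polynomial.X ^ (∑ i, m i) := by
  rw [i0, coe_eval₂Hom, eval₂_monomial, Finsupp.prod_fintype _ _ (by simp), Fin.prod_univ_succ,
    monomial_eq, Finsupp.prod_fintype _ _ (by simp), Fin.sum_univ_succ]
  simp only [Fin.cons_zero, Fin.cons_succ, mul_pow, Finset.prod_mul_distrib, Finset.prod_pow_eq_pow_sum,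
    Polynomial.C_mul, pow_add, Finsupp.tail_apply, RingHom.comp_apply, map_prod, Polynomial.C_pow]
  ring

lemma i0_coeff (b : MvPolynomial (Fin (n+1)) k) (m : Fin (n+1) →₀ ℕ) :
    ((i0 b).coeff (∑ i, m i)).coeff m.tail = b.coeff m := by
  induction b using MvPolynomial.induction_on' with
  | monomial m' c =>
    rw [i0_monomial, Polynomial.coeff_C_mul_X_pow, coeff_monomial]
    by_cases h : m' = m
    · subst h; simp
    · rw [if_neg h]
      split_ifs with h2
      · rw [coeff_monomial, if_neg]
        intro h3
        apply h
        have : m' 0 = m 0 := by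
          rw [Fin.sum_univ_succ, Fin.sum_univ_succ] at h2
          have h4 : ∀ i : Fin n, m' i.succ = m i.succ := fun i => by
            rw [← Finsupp.tail_apply, ← Finsupp.tail_apply, h3]
          simp only [h4] at h2
          omega
        rw [← Finsupp.cons_tail m', ← Finsupp.cons_tail m, this, h3]
      · simp
  | add p q hp hq => simp only [map_add, Polynomial.coeff_add, coeff_add, hp, hq]

/-- the embedding -/
def em : MvPolynomial (Fin (n+1)) k →+* Polynomial (FractionRing (MvPolynomial (Fin n) k)) :=
  (Polynomial.mapRingHom (algebraMap _ _)).comp i0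

lemma mapinj : Function.Injective (Polynomial.mapRingHom (algebraMap (MvPolynomial (Fin n) k)
    (FractionRing (MvPolynomial (Fin n) k)))) :=
  Polynomial.map_injective _ (IsFractionRing.injective _ _)

lemma em_inj : Function.Injective (em (k := k) (n := n)) := by
  apply mapinj.comp
  rw [injective_iff_map_eq_zero]
  intro b hb
  ext m
  rw [← i0_coeff, hb]; simp

lemma em_deg {b : MvPolynomial (Fin (n+1)) k} (h : (em b).natDegree = 0) : ∃ c, b = C c := by
  refine ⟨b.coeff 0, ?_⟩
  have h' : (i0 b).natDegree = 0 := by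
    rw [← h]
    exact (Polynomial.natDegree_map_eq_of_injective (IsFractionRing.injective _ _) _).symm
  ext m
  rw [coeff_C]
  split_ifs with hm
  · rw [hm]
  · rw [← i0_coeff, Polynomial.coeff_eq_zero_of_natDegree_lt, coeff_zero]
    rw [h', Nat.pos_iff_ne_zero]
    intro h0
    apply hm
    ext i
    rw [Finset.sum_eq_zero_iff] at h0
    simp [h0 i (Finset.mem_univ i)]

lemma em_coeff0 (b : MvPolynomial (Fin (n+1)) k) :
    (em b).coeff 0 = algebraMap k _ (constantCoeff b) := by
  have : (Polynomial.constantCoeff.comp em) =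
      (algebraMap k (FractionRing (MvPolynomial (Fin n) k))).comp constantCoeff := by
    apply MvPolynomial.ringHom_ext
    · intro r
      simp [em, i0_C]
      rw [IsScalarTower.algebraMap_apply k (MvPolynomial (Fin n) k)]
      rfl
    · intro i
      refine Fin.cases ?_ (fun j => ?_) i
      · simp [em, i0_X0]
      · simp [em, i0_Xs]
  exact RingHom.congr_fun this b

lemma i0_clear (g : Polynomial (MvPolynomial (Fin n) k)) :
    ∃ (N : ℕ) (b : MvPolynomial (Fin (n+1)) k), g * Polynomial.X ^ N = i0 b := by
  induction g using Polynomial.induction_on' with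
  | add p q hp hq =>
    obtain ⟨N, b, h⟩ := hp
    obtain ⟨M, c, h2⟩ := hq
    refine ⟨N + M, b * X 0 ^ M + c * X 0 ^ N, ?_⟩
    rw [map_add, map_mul, map_mul, map_pow, map_pow, i0_X0, ← h, ← h2]; ring
  | monomial d s =>
    suffices h : ∃ (N : ℕ) (b : MvPolynomial (Fin (n+1)) k), Polynomial.C s * Polynomial.X ^ N = i0 b by
      obtain ⟨N, b, h⟩ := h
      refine ⟨N, b * X 0 ^ d, ?_⟩
      rw [map_mul, map_pow, i0_X0, ← h, ← Polynomial.C_mul_X_pow_eq_monomial]; ring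
    induction s using MvPolynomial.induction_on with
    | C a => exact ⟨0, C a, by rw [i0_C]; simp⟩
    | add p q hp hq =>
      obtain ⟨N, b, h⟩ := hp
      obtain ⟨M, c, h2⟩ := hq
      refine ⟨N + M, b * X 0 ^ M + c * X 0 ^ N, ?_⟩
      simp only [map_add, map_mul, map_pow, i0_X0, ← h, ← h2]; ring
    | mul_X p i hp =>
      obtain ⟨N, b, h⟩ := hp
      refine ⟨N + 1, b * X i.succ, ?_⟩
      simp only [map_mul, i0_Xs, ← h]; ring

lemma em_clear (g : Polynomial (FractionRing (MvPolynomial (Fin n) k))) :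
    ∃ (N : ℕ) (c : FractionRing (MvPolynomial (Fin n) k)) (e b : MvPolynomial (Fin (n+1)) k),
      c ≠ 0 ∧ em e = Polynomial.C c * Polynomial.X ^ N ∧ g * em e = em b := by
  obtain ⟨s, hs⟩ := IsLocalization.integerNormalization_map_to_map
    (nonZeroDivisors (MvPolynomial (Fin n) k)) g
  set g0 := IsLocalization.integerNormalization (nonZeroDivisors (MvPolynomial (Fin n) k)) g
  obtain ⟨N, b, h1⟩ := i0_clear g0
  obtain ⟨M, e, h2⟩ := i0_clear (Polynomial.C (s : MvPolynomial (Fin n) k))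
  refine ⟨M + N, algebraMap _ _ (s : MvPolynomial (Fin n) k), e * X 0 ^ N, b * X 0 ^ M, ?_, ?_, ?_⟩
  · rw [Ne, map_eq_zero_iff _ (IsFractionRing.injective _ _)]
    exact nonZeroDivisors.ne_zero s.2
  · simp only [em, RingHom.comp_apply, map_mul, map_pow, i0_X0, ← h2]
    simp [pow_add, mul_assoc]
  · simp only [em, RingHom.comp_apply, map_mul, map_pow, i0_X0, ← h1, ← h2]
    simp only [Polynomial.coe_mapRingHom, hs, Polynomial.map_C, Polynomial.map_X]
    rw [← IsScalarTower.algebraMap_smul (FractionRing (MvPolynomial (Fin n) k)) (s : MvPolynomial (Fin n) k) g,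
      Polynomial.smul_eq_C_mul]
    ring

lemma unit_of_dvd {K : Type*} [Field K] {g : Polynomial K} (hg : g.coeff 0 ≠ 0) {c : K} (hc : c ≠ 0)
    {N : ℕ} (h : g ∣ Polynomial.C c * Polynomial.X ^ N) : IsUnit g := by
  have hcop : IsCoprime g Polynomial.X := by
    rw [isCoprime_comm, Polynomial.irreducible_X.coprime_iff_not_dvd, Polynomial.X_dvd_iff]
    exact hg
  have := (hcop.pow_right (n := N)).dvd_of_dvd_mul_right h
  exact isUnit_of_dvd_unit this (Polynomial.isUnit_C.2 (isUnit_iff_ne_zero.2 hc))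

lemma not_const {z : MvPolynomial (Fin (n+1)) k} (hz : Prime z) : ¬ ∃ c, z = C c := by
  rintro ⟨c, rfl⟩
  have hc : c ≠ 0 := by rintro rfl; simpa using hz.ne_zero
  exact hz.not_isUnit ((isUnit_iff_ne_zero.2 hc).map C)

lemma em_not_unit {z : MvPolynomial (Fin (n+1)) k} (hz : Prime z) : ¬ IsUnit (em z) := fun h =>
  not_const hz (em_deg (Polynomial.natDegree_eq_zero_of_isUnit h))

lemma em_coprime {y z : MvPolynomial (Fin (n+1)) k} (hy : Prime y) (hz : Prime z)
    (hna : ¬ z ∣ y) (hz0 : constantCoeff z ≠ 0) : IsCoprime (em z) (em y) := by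
  have hzc : (em z).coeff 0 ≠ 0 := by rw [em_coeff0]; simpa using hz0
  have hzn : ∀ {N : ℕ} {c} {e : MvPolynomial (Fin (n+1)) k}, c ≠ 0 →
      em e = Polynomial.C c * Polynomial.X ^ N → ¬ z ∣ e := by
    intro N c e hc he hd
    have := map_dvd (em (k := k) (n := n)) hd
    rw [he] at this
    exact em_not_unit hz (unit_of_dvd hzc hc this)
  apply EuclideanDomain.isCoprime_of_dvd
  · rintro ⟨h, -⟩
    rw [h] at hzc; simp at hzc
  intro g hg hg0 hgz hgy
  have hgc : g.coeff 0 ≠ 0 := by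
    intro h
    obtain ⟨w, hw⟩ := hgz
    rw [hw, Polynomial.mul_coeff_zero, h, zero_mul] at hzc
    exact hzc rfl
  obtain ⟨h, hh⟩ := hgz
  obtain ⟨h', hh'⟩ := hgy
  obtain ⟨N, c, e, b, hc, he, hb⟩ := em_clear g
  obtain ⟨N1, c1, e1, b1, hc1, he1, hb1⟩ := em_clear h
  obtain ⟨N2, c2, e2, b2, hc2, he2, hb2⟩ := em_clear h'
  have r1 : z * (e * e1) = b * b1 := by
    apply em_inj
    simp only [map_mul, hh, ← hb, ← hb1]; ring
  have r2 : y * (e * e2) = b * b2 := by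
    apply em_inj
    simp only [map_mul, hh', ← hb, ← hb2]; ring
  rcases hz.dvd_or_dvd (Dvd.intro _ r1) with hd | hd
  · have : z ∣ y * (e * e2) := r2 ▸ hd.mul_right _
    rcases hz.dvd_or_dvd this with h3 | h3
    · exact hna h3
    rcases hz.dvd_or_dvd h3 with h3 | h3
    · exact hzn hc he h3
    · exact hzn hc2 he2 h3
  · obtain ⟨w, rfl⟩ := hd
    apply hg
    apply unit_of_dvd hgc hc1 (N := N1)
    rw [← he1]
    have hne : h ≠ 0 := by
      rintro rfl
      rw [mul_zero] at hh
      rw [hh] at hzc; simp at hzc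
    refine ⟨em w, mul_left_cancel₀ hne ?_⟩
    rw [hb1, map_mul, hh]; ring

lemma em_integral (g : Polynomial (FractionRing (MvPolynomial (Fin n) k)))
    (hg : (em (k := k) (n := n)).IsIntegralElem g) : ∃ b, em b = g := by
  obtain ⟨N, c, e, b, hc, he, hb⟩ := em_clear g
  have he0 : e ≠ 0 := by
    rintro rfl
    rw [map_zero] at he
    have : (Polynomial.C c * Polynomial.X ^ N) ≠ 0 :=
      mul_ne_zero (by simpa using hc) (pow_ne_zero _ Polynomial.X_ne_zero)
    exact this he.symm
  let B := MvPolynomial (Fin (n+1)) k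
  let P := Polynomial (FractionRing (MvPolynomial (Fin n) k))
  let F := FractionRing P
  let j : B →+* F := (algebraMap P F).comp em
  have hj : Function.Injective j := (IsFractionRing.injective P F).comp em_inj
  let L := FractionRing B
  let l : L →+* F := IsFractionRing.lift hj
  let w : L := algebraMap B L b / algebraMap B L e
  have hl : ∀ a, l (algebraMap B L a) = algebraMap P F (em a) := fun a => IsFractionRing.lift_algebraMap hj a
  have hw : l w = algebraMap P F g := by
    rw [map_div₀, hl, hl, ← hb, map_mul, mul_div_cancel_right₀]
    rw [Ne, map_eq_zero_iff _ (IsFractionRing.injective P F), map_eq_zero_iff _ em_inj]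
    exact he0
  have hwi : IsIntegral B w := by
    obtain ⟨Q, hQ, hQg⟩ := hg
    refine ⟨Q, hQ, ?_⟩
    apply l.injective
    rw [Polynomial.hom_eval₂, hw, map_zero]
    have h2 : l.comp (algebraMap B L) = (algebraMap P F).comp em := RingHom.ext hl
    rw [h2, ← Polynomial.hom_eval₂, hQg, map_zero]
  obtain ⟨a, ha⟩ := IsIntegrallyClosed.isIntegral_iff.1 hwi
  refine ⟨a, IsFractionRing.injective P F ?_⟩
  rw [← hl, ha, hw]

end emb
end
end E8

namespace E8
noncomputable section
open MvPolynomial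

section contra
variable {k : Type*} [Field k] [IsAlgClosed k] [CharZero k] {n : ℕ}

lemma arith {a b c : ℕ} (ha : 2 ≤ a) (hb : 2 ≤ b) (hc : 2 ≤ c) (hab : Nat.Coprime a b)
    (hbc : Nat.Coprime b c) (hca : Nat.Coprime c a) :
    b * c + c * a + a * b ≤ a * b * c ∨ (a = 2 ∧ b = 3 ∧ c = 5) ∨ (a = 2 ∧ b = 5 ∧ c = 3) ∨
    (a = 3 ∧ b = 2 ∧ c = 5) ∨ (a = 3 ∧ b = 5 ∧ c = 2) ∨ (a = 5 ∧ b = 2 ∧ c = 3) ∨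
    (a = 5 ∧ b = 3 ∧ c = 2) := by
  have two : ∀ b c : ℕ, 2 ≤ b → 2 ≤ c → Nat.Coprime 2 b → Nat.Coprime b c → Nat.Coprime c 2 →
      b * c + c * 2 + 2 * b ≤ 2 * b * c ∨ (b = 3 ∧ c = 5) ∨ (b = 5 ∧ c = 3) := by
    intro b c hb hc h1 h2 h3
    by_cases hb5 : b ≤ 5
    · by_cases hc5 : c ≤ 5
      · interval_cases b <;> interval_cases c <;> revert h1 h2 h3 <;> decide
      · interval_cases b <;> first | (exfalso; revert h1; decide) | (left; omega) | skip
    · by_cases hc5 : c ≤ 5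
      · interval_cases c <;> first | (exfalso; revert h3; decide) | (left; omega) | skip
      · left
        nlinarith
  by_cases h : a = 2
  · subst h
    rcases two b c hb hc hab hbc hca with h | h | h
    · left; exact h
    · right; left; exact ⟨rfl, h⟩
    · right; right; left; exact ⟨rfl, h⟩
  by_cases h' : b = 2
  · subst h'
    rcases two c a hc ha hbc hca hab with h | h | h
    · left; linarith
    · obtain ⟨rfl, rfl⟩ := h; right; right; right; right; right; left; exact ⟨rfl, rfl, rfl⟩
    · obtain ⟨rfl, rfl⟩ := h; right; right; right; left; exact ⟨rfl, rfl, rfl⟩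
  by_cases h'' : c = 2
  · subst h''
    rcases two a b ha hb hca hab hbc with h | h | h
    · left; linarith
    · obtain ⟨rfl, rfl⟩ := h; right; right; right; right; left; exact ⟨rfl, rfl, rfl⟩
    · obtain ⟨rfl, rfl⟩ := h; right; right; right; right; right; right; exact ⟨rfl, rfl, rfl⟩
  left
  have ha3 : 3 ≤ a := by omega
  have hb3 : 3 ≤ b := by omega
  have hc3 : 3 ≤ c := by omega
  have p1 := Nat.mul_le_mul_right (b * c) ha3
  have p2 := Nat.mul_le_mul_right (c * a) hb3
  have p3 := Nat.mul_le_mul_right (a * b) hc3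
  nlinarith

lemma const_of_pow {v : MvPolynomial (Fin (n+1)) k} {c : k} (h : v ^ 5 = C c) : ∃ d, v = C d := by
  by_cases hc : c = 0
  · rw [hc, C_0] at h
    exact ⟨0, by rw [C_0]; exact (pow_eq_zero_iff (by norm_num)).1 h⟩
  · have hu : IsUnit (v ^ 5) := h ▸ (isUnit_iff_ne_zero.2 hc).map C
    have := (isUnit_pow_iff (by norm_num)).1 hu
    rw [isUnit_iff_eq_C_of_isReduced] at this
    obtain ⟨d, -, hd⟩ := this
    exact ⟨d, hd⟩

lemma kf_const {u v : MvPolynomial (Fin (n+1)) k} (h : Irreducible (kf u v)) : False := by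
  suffices hc : (∃ c, u = C c) ∧ ∃ d, v = C d by
    obtain ⟨⟨c, rfl⟩, ⟨d, rfl⟩⟩ := hc
    rw [← map_kf] at h
    have h0 := h.ne_zero
    have hne : kf c d ≠ 0 := by intro h'; rw [h', C_0] at h0; exact h0 rfl
    exact h.not_isUnit ((isUnit_iff_ne_zero.2 hne).map C)
  obtain ⟨e, he⟩ := IsAlgClosed.exists_pow_nat_eq (125 : k) (n := 2) (by norm_num)
  have he0 : e ≠ 0 := by
    rintro rfl
    norm_num at he
  set r1 : k := (-11 + e) / 2 with hr1
  set r2 : k := (-11 - e) / 2 with hr2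
  have hs : r1 + r2 = -11 := by rw [hr1, hr2]; ring
  have hp : r1 * r2 = -1 := by rw [hr1, hr2]; linear_combination (-1/4) * he
  have hd : r1 - r2 = e := by rw [hr1, hr2]; ring
  have hs' : (C r1 + C r2 : MvPolynomial (Fin (n+1)) k) = -11 := by
    rw [← C_add, hs, C_neg, map_ofNat]
  have hp' : (C r1 * C r2 : MvPolynomial (Fin (n+1)) k) = -1 := by
    rw [← C_mul, hp]; simp
  have hd' : (C r1 - C r2 : MvPolynomial (Fin (n+1)) k) = C e := by
    rw [← C_sub, hd]
  have hfac : kf u v = (u * v) * ((u^5 - C r1 * v^5) * (u^5 - C r2 * v^5)) := by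
    rw [kf]
    linear_combination u * v * (u^5 * v^5 * hs' - v^10 * hp')
  rw [hfac] at h
  have unitC : ∀ {w : MvPolynomial (Fin (n+1)) k}, IsUnit w → ∃ c, w = C c := by
    intro w hw
    rw [isUnit_iff_eq_C_of_isReduced] at hw
    obtain ⟨d, -, hd⟩ := hw
    exact ⟨d, hd⟩
  rcases h.isUnit_or_isUnit rfl with hu | hu
  · exact ⟨unitC (isUnit_of_mul_isUnit_left hu), unitC (isUnit_of_mul_isUnit_right hu)⟩
  · obtain ⟨c1, h1⟩ := unitC (isUnit_of_mul_isUnit_left hu)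
    obtain ⟨c2, h2⟩ := unitC (isUnit_of_mul_isUnit_right hu)
    have hinv : (C e⁻¹ * C e : MvPolynomial (Fin (n+1)) k) = 1 := by
      rw [← C_mul, inv_mul_cancel₀ he0, C_1]
    have hv : v ^ 5 = C (e⁻¹ * (c2 - c1)) := by
      rw [C_mul, C_sub]
      linear_combination C e⁻¹ * h2 - C e⁻¹ * h1 - (C e⁻¹ * v^5) * hd' - v^5 * hinv
    have hu : u ^ 5 = C (c1 + r1 * (e⁻¹ * (c2 - c1))) := by
      rw [C_add, C_mul, ← hv]
      linear_combination h1
    exact ⟨const_of_pow hu, const_of_pow hv⟩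

lemma e8_aux {x y z : MvPolynomial (Fin (n+1)) k} (hy : Prime y) (hz : Prime z)
    (hna : ¬ z ∣ y) (hx0 : constantCoeff x ≠ 0) (hy0 : constantCoeff y ≠ 0) (hz0 : constantCoeff z ≠ 0)
    (hrel : x^2 + y^3 = 1728 * z^5) : False := by
  let K := FractionRing (MvPolynomial (Fin n) k)
  have : CharZero K := charZero_of_injective_algebraMap (algebraMap k K).injective
  have hrel' : (em x)^2 + (em y)^3 = 1728 * (em z)^5 := by
    rw [← map_pow, ← map_pow, ← map_pow, ← map_add, hrel, map_mul, map_ofNat]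
  obtain ⟨u, v, h1, h2⟩ := klein_solve (k := k) hrel' (em_coprime hy hz hna hz0) hx0 hy0 hz0
    (em_coeff0 x) (em_coeff0 y) (em_coeff0 z)
  let B := MvPolynomial (Fin (n+1)) k
  let P := Polynomial (FractionRing (MvPolynomial (Fin n) k))
  let F := FractionRing P
  let j : B →+* F := (algebraMap P F).comp em
  letI : Algebra B F := j.toAlgebra
  have hunit : IsUnit (3125 : B) := by
    have : (3125 : B) = C 3125 := (map_ofNat C 3125).symm
    rw [this]
    exact (isUnit_iff_ne_zero.2 (by norm_num : (3125 : k) ≠ 0)).map C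
  obtain ⟨i1, i2⟩ := integral_coords (R := B) hunit (algebraMap P F u) (algebraMap P F v)
    (by rw [← map_kf, h1]; exact isIntegral_algebraMap (R := B) (x := z))
    (by rw [← map_kH, h2]; exact isIntegral_algebraMap (R := B) (x := y))
  have down : ∀ g : P, IsIntegral B (algebraMap P F g) → ∃ b, em b = g := by
    intro g hg
    apply em_integral
    obtain ⟨Q, hQ, hQg⟩ := hg
    refine ⟨Q, hQ, IsFractionRing.injective P F ?_⟩
    rw [Polynomial.hom_eval₂, map_zero]
    exact hQg
  obtain ⟨u1, rfl⟩ := down u i1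
  obtain ⟨v1, rfl⟩ := down v i2
  have : kf u1 v1 = z := em_inj (by rw [map_kf, h1])
  exact kf_const (this ▸ hz.irreducible)

lemma prime_C_mul {z : MvPolynomial (Fin (n+1)) k} (hz : Prime z) {c : k} (hc : c ≠ 0) :
    Associated z (C c * z) := by
  have hu : IsUnit (C c : MvPolynomial (Fin (n+1)) k) := (isUnit_iff_ne_zero.2 hc).map C
  obtain ⟨w, hw⟩ := hu
  exact ⟨w, by rw [hw, mul_comm]⟩

lemma e8_gen {x y z : MvPolynomial (Fin (n+1)) k} (hy : Prime y) (hz : Prime z)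
    (hna : ¬ z ∣ y) (hx0 : constantCoeff x ≠ 0) (hy0 : constantCoeff y ≠ 0) (hz0 : constantCoeff z ≠ 0)
    {α β γ : k} (hα : α ≠ 0) (hβ : β ≠ 0) (hγ : γ ≠ 0)
    (hrel : C α * x^2 + C β * y^3 + C γ * z^5 = 0) : False := by
  obtain ⟨s1, h1⟩ := IsAlgClosed.exists_pow_nat_eq α (n := 2) (by norm_num)
  obtain ⟨s2, h2⟩ := IsAlgClosed.exists_pow_nat_eq β (n := 3) (by norm_num)
  obtain ⟨s3, h3⟩ := IsAlgClosed.exists_pow_nat_eq (-γ/1728) (n := 5) (by norm_num)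
  have n1 : s1 ≠ 0 := by rintro rfl; apply hα; rw [← h1]; ring
  have n2 : s2 ≠ 0 := by rintro rfl; apply hβ; rw [← h2]; ring
  have n3 : s3 ≠ 0 := by
    rintro rfl; apply hγ
    have : γ = - 1728 * (-γ/1728) := by ring
    rw [this, ← h3]; ring
  have a2 := prime_C_mul hy n2
  have a3 := prime_C_mul hz n3
  refine e8_aux (x := C s1 * x) (y := C s2 * y) (z := C s3 * z) (a2.prime hy) (a3.prime hz) ?_
    (by simp [n1, hx0]) (by simp [n2, hy0]) (by simp [n3, hz0]) ?_
  · intro h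
    exact hna ((a3.dvd.trans h).trans a2.symm.dvd)
  · have g3 : (1728 * C s3 ^ 5 : MvPolynomial (Fin (n+1)) k) = - C γ := by
      have : (1728 : MvPolynomial (Fin (n+1)) k) = C 1728 := (map_ofNat C 1728).symm
      rw [← C_pow, h3, this, ← C_mul, ← C_neg]
      congr 1; field_simp
    have g1 : (C s1 ^ 2 : MvPolynomial (Fin (n+1)) k) = C α := by rw [← C_pow, h1]
    have g2 : (C s2 ^ 3 : MvPolynomial (Fin (n+1)) k) = C β := by rw [← C_pow, h2]
    linear_combination hrel + x^2 * g1 + y^3 * g2 - z^5 * g3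

lemma tri_gen {x y z : MvPolynomial (Fin (n+1)) k} (hx : Prime x) (hy : Prime y) (hz : Prime z)
    (hxy : ¬ Associated x y) (hyz : ¬ Associated y z) (hxz : ¬ Associated x z)
    (hx0 : constantCoeff x ≠ 0) (hy0 : constantCoeff y ≠ 0) (hz0 : constantCoeff z ≠ 0)
    {α β γ : k} (hα : α ≠ 0) (hβ : β ≠ 0) (hγ : γ ≠ 0) {a b c : ℕ}
    (ha : 2 ≤ a) (hb : 2 ≤ b) (hc : 2 ≤ c) (hab : Nat.Coprime a b)
    (hbc : Nat.Coprime b c) (hca : Nat.Coprime c a)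
    (hrel : C α * x^a + C β * y^b + C γ * z^c = 0) : False := by
  have nd : ∀ {p q : MvPolynomial (Fin (n+1)) k}, Prime p → Prime q → ¬ Associated p q → ¬ q ∣ p := by
    intro p q hp hq h hd
    exact h (hq.associated_of_dvd hp hd).symm
  have sy : ∀ {p q : MvPolynomial (Fin (n+1)) k}, ¬ Associated p q → ¬ Associated q p :=
    fun h h' => h h'.symm
  rcases arith ha hb hc hab hbc hca with h | h | h | h | h | h | h
  · let K := FractionRing (MvPolynomial (Fin n) k)
    have : CharZero K := charZero_of_injective_algebraMap (algebraMap k K).injective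
    have emC : ∀ c : k, em (n := n) (C c) = Polynomial.C (algebraMap k K c) := by
      intro c
      simp only [em, RingHom.comp_apply, i0_C, Polynomial.coe_mapRingHom, Polynomial.map_C]
      rw [IsScalarTower.algebraMap_apply k (MvPolynomial (Fin n) k)]
      rfl
    have hrel' := congrArg em hrel
    simp only [map_add, map_mul, map_pow, map_zero, emC] at hrel'
    have nz : ∀ {p : MvPolynomial (Fin (n+1)) k}, Prime p → em p ≠ 0 := fun hp => by
      rw [Ne, map_eq_zero_iff _ em_inj]; exact hp.ne_zero
    have := Polynomial.flt_catalan (k := K) (p := a) (q := b) (r := c) (by omega) (by omega) (by omega) h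
      (by simp; omega) (by simp; omega) (by simp; omega) (nz hx) (nz hy) (nz hz)
      (em_coprime hy hx (nd hy hx (sy hxy)) hx0) (by simpa using hα) (by simpa using hβ)
      (by simpa using hγ) hrel'
    exact not_const hx (em_deg this.1)
  · obtain ⟨rfl, rfl, rfl⟩ := h
    exact e8_gen hy hz (nd hy hz hyz) hx0 hy0 hz0 hα hβ hγ hrel
  · obtain ⟨rfl, rfl, rfl⟩ := h
    exact e8_gen hz hy (nd hz hy (sy hyz)) hx0 hz0 hy0 hα hγ hβ (by linear_combination hrel)
  · obtain ⟨rfl, rfl, rfl⟩ := h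
    exact e8_gen hx hz (nd hx hz hxz) hy0 hx0 hz0 hβ hα hγ (by linear_combination hrel)
  · obtain ⟨rfl, rfl, rfl⟩ := h
    exact e8_gen hx hy (nd hx hy hxy) hz0 hx0 hy0 hγ hα hβ (by linear_combination hrel)
  · obtain ⟨rfl, rfl, rfl⟩ := h
    exact e8_gen hz hx (nd hz hx (sy hxz)) hy0 hz0 hx0 hβ hγ hα (by linear_combination hrel)
  · obtain ⟨rfl, rfl, rfl⟩ := h
    exact e8_gen hy hx (nd hy hx (sy hxy)) hz0 hy0 hx0 hγ hβ hα (by linear_combination hrel)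

/-- translation -/
def trans (p : Fin (n+1) → k) : MvPolynomial (Fin (n+1)) k ≃ₐ[k] MvPolynomial (Fin (n+1)) k :=
  AlgEquiv.ofAlgHom (aeval fun i => X i + C (p i)) (aeval fun i => X i - C (p i))
    (by ext i; simp [algebraMap_eq]) (by ext i; simp [algebraMap_eq])

omit [IsAlgClosed k] [CharZero k] in
lemma trans_cc (p : Fin (n+1) → k) (w : MvPolynomial (Fin (n+1)) k) :
    constantCoeff (trans p w) = eval p w := by
  have : (constantCoeff.comp (trans p : MvPolynomial (Fin (n+1)) k →+* MvPolynomial (Fin (n+1)) k)) = eval p := by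
    apply MvPolynomial.ringHom_ext
    · intro r; simp [trans]
    · intro i; simp [trans]
  exact RingHom.congr_fun this w

theorem tri_final {x y z : MvPolynomial (Fin (n+1)) k} (hx : Prime x) (hy : Prime y) (hz : Prime z)
    (hxy : ¬ Associated x y) (hyz : ¬ Associated y z) (hxz : ¬ Associated x z)
    {α β γ : k} (hα : α ≠ 0) (hβ : β ≠ 0) (hγ : γ ≠ 0) {a b c : ℕ}
    (ha : 2 ≤ a) (hb : 2 ≤ b) (hc : 2 ≤ c) (hab : Nat.Coprime a b)
    (hbc : Nat.Coprime b c) (hca : Nat.Coprime c a)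
    (hrel : C α * x^a + C β * y^b + C γ * z^c = 0) : False := by
  have hprod : x * y * z ≠ 0 := mul_ne_zero (mul_ne_zero hx.ne_zero hy.ne_zero) hz.ne_zero
  obtain ⟨p, hp⟩ : ∃ p, eval p (x * y * z) ≠ 0 := by
    by_contra hcon
    push Not at hcon
    exact hprod (MvPolynomial.funext fun p => by rw [hcon p, map_zero])
  simp only [map_mul, ne_eq, mul_eq_zero, not_or] at hp
  have as : ∀ {u v : MvPolynomial (Fin (n+1)) k}, ¬ Associated u v → ¬ Associated (trans p u) (trans p v) := by
    intro u v h h'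
    apply h
    have := h'.map (trans p).symm.toMulEquiv.toMonoidHom
    simpa using this
  have pr : ∀ {u : MvPolynomial (Fin (n+1)) k}, Prime u → Prime (trans p u) := by
    intro u hu
    exact (MulEquiv.prime_iff (trans p).toMulEquiv).2 hu
  have hrel' := congrArg (trans p) hrel
  have hC : ∀ c : k, trans p (C c) = C c := fun c => by simp [trans]
  simp only [map_add, map_mul, map_pow, map_zero, hC] at hrel'
  exact tri_gen (pr hx) (pr hy) (pr hz) (as hxy) (as hyz) (as hxz) (by rw [trans_cc]; exact hp.1.1)
    (by rw [trans_cc]; exact hp.1.2) (by rw [trans_cc]; exact hp.2) hα hβ hγ ha hb hc hab hbc hca hrel'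

end contra
end
end E8

namespace E8
noncomputable section
open MvPolynomial

section mori
variable {k : Type*} [Field k] (Δ : MoriData k)

def T (l : Fin (Δ.r + 1)) : Δ.Ring := Ideal.Quotient.mk _ (X l)

def vp (l : Fin (Δ.r + 1)) : k := if (l : ℕ) = 0 then 1 else if (l : ℕ) = 1 then 0 else -1
def vq (l : Fin (Δ.r + 1)) : k := if (l : ℕ) = 0 then 0 else if (l : ℕ) = 1 then 1 else - Δ.lam l

lemma val_one : ((1 : Fin (Δ.r + 1)) : ℕ) = 1 := by
  have := Δ.one_le_r
  rw [Fin.val_one']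
  exact Nat.mod_eq_of_lt (by omega)

lemma vp0 : vp Δ 0 = 1 := by simp [vp]
lemma vq0 : vq Δ 0 = 0 := by simp [vq]
lemma vp1 : vp Δ 1 = 0 := by
  have h := val_one Δ
  simp only [vp]
  rw [h]; simp
lemma vq1 : vq Δ 1 = 1 := by
  have h := val_one Δ
  simp only [vq]
  rw [h]; simp
lemma vp2 {l : Fin (Δ.r + 1)} (h : 2 ≤ (l : ℕ)) : vp Δ l = -1 := by
  rw [vp, if_neg (by omega), if_neg (by omega)]
lemma vq2 {l : Fin (Δ.r + 1)} (h : 2 ≤ (l : ℕ)) : vq Δ l = - Δ.lam l := by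
  rw [vq, if_neg (by omega), if_neg (by omega)]

lemma tricase (l : Fin (Δ.r + 1)) : l = 0 ∨ l = 1 ∨ 2 ≤ (l : ℕ) := by
  have h := val_one Δ
  rcases Nat.lt_or_ge (l : ℕ) 2 with h2 | h2
  · rcases Nat.lt_or_ge (l : ℕ) 1 with h1 | h1
    · left; apply Fin.ext; rw [Fin.val_zero]; omega
    · right; left; apply Fin.ext; omega
  · exact Or.inr (Or.inr h2)

lemma det_ne {i j : Fin (Δ.r + 1)} (h : i ≠ j) : vp Δ i * vq Δ j - vp Δ j * vq Δ i ≠ 0 := by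
  rcases tricase Δ i with rfl | rfl | hi <;> rcases tricase Δ j with rfl | rfl | hj
  · exact absurd rfl h
  · simp [vp0, vq0, vp1, vq1]
  · simp [vp0, vq0, vq2 Δ hj, Δ.lam_ne_zero j hj]
  · simp [vp0, vq0, vp1, vq1]
  · exact absurd rfl h
  · simp [vp1, vq1, vp2 Δ hj]
  · simp [vp0, vq0, vq2 Δ hi, Δ.lam_ne_zero i hi]
  · simp [vp1, vq1, vp2 Δ hi]
  · rw [vp2 Δ hi, vp2 Δ hj, vq2 Δ hi, vq2 Δ hj]
    intro h'
    exact h (Δ.lam_injOn i j hi hj (by linear_combination -h'))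

lemma vne (i : Fin (Δ.r + 1)) : vp Δ i ≠ 0 ∨ vq Δ i ≠ 0 := by
  rcases tricase Δ i with rfl | rfl | hi
  · left; simp [vp0]
  · right; simp [vq1]
  · left; simp [vp2 Δ hi]

lemma T_rel (l : Fin (Δ.r + 1)) : T Δ l ^ Δ.β l =
    algebraMap k _ (vp Δ l) * T Δ 0 ^ Δ.β 0 + algebraMap k _ (vq Δ l) * T Δ 1 ^ Δ.β 1 := by
  rcases tricase Δ l with rfl | rfl | hl
  · simp [vp0, vq0]
  · simp [vp1, vq1]
  · have h : T Δ 0 ^ Δ.β 0 + algebraMap k _ (Δ.lam l) * T Δ 1 ^ Δ.β 1 + T Δ l ^ Δ.β l = 0 := by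
      have := Ideal.Quotient.eq_zero_iff_mem.2 (Ideal.subset_span
        (s := {p | ∃ i : Fin (Δ.r + 1), 2 ≤ (i : ℕ) ∧
          p = X 0 ^ Δ.β 0 + C (Δ.lam i) * X 1 ^ Δ.β 1 + X i ^ Δ.β i}) ⟨l, hl, rfl⟩)
      rw [map_add, map_add, map_mul, map_pow, map_pow, map_pow] at this
      exact this
    rw [vp2 Δ hl, vq2 Δ hl, map_neg, map_neg, map_one]
    linear_combination h

/-- linear relation among any three -/
lemma T_lin (i j l : Fin (Δ.r + 1)) :
    algebraMap k _ (vp Δ j * vq Δ l - vp Δ l * vq Δ j) * T Δ i ^ Δ.β i +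
    algebraMap k _ (vp Δ l * vq Δ i - vp Δ i * vq Δ l) * T Δ j ^ Δ.β j +
    algebraMap k _ (vp Δ i * vq Δ j - vp Δ j * vq Δ i) * T Δ l ^ Δ.β l = 0 := by
  rw [T_rel Δ i, T_rel Δ j, T_rel Δ l]
  simp only [map_sub, map_mul]
  ring

def lift {S : Type*} [CommRing S] [Algebra k S] (t : Fin (Δ.r + 1) → S) (u v : S)
    (h : ∀ l, t l ^ Δ.β l = algebraMap k S (vp Δ l) * u + algebraMap k S (vq Δ l) * v) :
    Δ.Ring →ₐ[k] S :=
  Ideal.Quotient.liftₐ _ (aeval t) (by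
    intro a ha
    have : Ideal.span {p | ∃ i : Fin (Δ.r + 1), 2 ≤ (i : ℕ) ∧
      p = X 0 ^ Δ.β 0 + C (Δ.lam i) * X 1 ^ Δ.β 1 + X i ^ Δ.β i} ≤
        RingHom.ker (aeval (R := k) t) := by
      rw [Ideal.span_le]
      rintro p ⟨i, hi, rfl⟩
      have h0 := h 0
      have h1 := h 1
      have h2 := h i
      rw [vp0, vq0] at h0
      rw [vp1, vq1] at h1
      rw [vp2 Δ hi, vq2 Δ hi] at h2
      simp only [map_neg, map_one, map_zero] at h0 h1 h2
      simp only [SetLike.mem_coe, RingHom.mem_ker, map_add, map_mul, map_pow, aeval_X, aeval_C]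
      rw [h0, h1, h2]; ring
    exact this ha)

@[simp] lemma lift_T {S : Type*} [CommRing S] [Algebra k S] (t : Fin (Δ.r + 1) → S) (u v : S) (h)
    (l) : lift Δ t u v h (T Δ l) = t l := by
  simp only [lift, T]
  erw [Ideal.Quotient.liftₐ_apply, Ideal.Quotient.lift_mk]
  simp

lemma hom_ext {S : Type*} [CommRing S] [Algebra k S] {f g : Δ.Ring →ₐ[k] S}
    (h : ∀ l, f (T Δ l) = g (T Δ l)) : f = g := by
  apply Ideal.Quotient.algHom_ext
  apply MvPolynomial.algHom_ext
  exact h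

lemma T_induction {P : Δ.Ring → Prop} (hc : ∀ c, P (algebraMap k _ c))
    (ha : ∀ x y, P x → P y → P (x + y)) (hm : ∀ x l, P x → P (x * T Δ l)) (x) : P x := by
  obtain ⟨p, rfl⟩ := Ideal.Quotient.mk_surjective x
  induction p using MvPolynomial.induction_on with
  | C a => exact hc a
  | add p q hp hq => rw [map_add]; exact ha _ _ hp hq
  | mul_X p n hp => rw [map_mul]; exact hm _ _ hp

/-- Step 1 -/
lemma poly_case {i j : Fin (Δ.r + 1)} (hij : i ≠ j) (h : ∀ l, l ≠ i → l ≠ j → Δ.β l = 1) :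
    Nonempty (Δ.Ring ≃ₐ[k] MvPolynomial (Fin 2) k) := by
  have hd := det_ne Δ hij
  set d := vp Δ i * vq Δ j - vp Δ j * vq Δ i with hdd
  let c : Fin (Δ.r + 1) → k := fun l => (vp Δ l * vq Δ j - vp Δ j * vq Δ l) / d
  let e : Fin (Δ.r + 1) → k := fun l => (vp Δ i * vq Δ l - vp Δ l * vq Δ i) / d
  have hci : c i = 1 := div_self hd
  have hcj : c j = 0 := by simp only [c]; rw [sub_self, zero_div]
  have hej : e j = 1 := div_self hd
  have hei : e i = 0 := by simp only [e]; rw [sub_self, zero_div]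
  let t : Fin (Δ.r + 1) → MvPolynomial (Fin 2) k := fun l =>
    if l = i then X 0 else if l = j then X 1 else
      C (c l) * X 0 ^ Δ.β i + C (e l) * X 1 ^ Δ.β j
  have hti : t i = X 0 := if_pos rfl
  have htj : t j = X 1 := by simp [t, hij.symm]
  have htl : ∀ l, l ≠ i → l ≠ j → t l = C (c l) * X 0 ^ Δ.β i + C (e l) * X 1 ^ Δ.β j := by
    intro l h1 h2
    simp only [t]; rw [if_neg h1, if_neg h2]
  have ht : ∀ l, t l ^ Δ.β l = C (c l) * X 0 ^ Δ.β i + C (e l) * X 1 ^ Δ.β j := by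
    intro l
    by_cases h1 : l = i
    · subst h1; rw [hti, hci, hei]; simp
    by_cases h2 : l = j
    · subst h2; rw [htj, hcj, hej]; simp
    rw [htl l h1 h2, h l h1 h2, pow_one]
  let F : Δ.Ring →ₐ[k] MvPolynomial (Fin 2) k := lift Δ t
    (C (vq Δ j / d) * X 0 ^ Δ.β i - C (vq Δ i / d) * X 1 ^ Δ.β j)
    (-C (vp Δ j / d) * X 0 ^ Δ.β i + C (vp Δ i / d) * X 1 ^ Δ.β j) (by
      intro l
      rw [ht]
      have h1 : c l = vp Δ l * (vq Δ j / d) - vq Δ l * (vp Δ j / d) := by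
        simp only [c]; ring
      have h2 : e l = vq Δ l * (vp Δ i / d) - vp Δ l * (vq Δ i / d) := by
        simp only [e]; ring
      rw [h1, h2, MvPolynomial.algebraMap_eq]
      simp only [C_sub, C_mul]
      ring)
  let G : MvPolynomial (Fin 2) k →ₐ[k] Δ.Ring := aeval ![T Δ i, T Δ j]
  refine ⟨AlgEquiv.ofAlgHom F G ?_ ?_⟩
  · apply MvPolynomial.algHom_ext
    intro a
    fin_cases a
    · simp [F, G, hti]
    · simp [F, G, htj]
  · apply hom_ext
    intro l
    have hF : F (T Δ l) = t l := lift_T Δ t _ _ _ l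
    rw [AlgHom.comp_apply, hF, AlgHom.id_apply]
    by_cases h1 : l = i
    · subst h1; rw [hti]; simp [G]
    by_cases h2 : l = j
    · subst h2; rw [htj]; simp [G]
    rw [htl l h1 h2]
    have hl := T_lin Δ i j l
    rw [h l h1 h2, pow_one, ← hdd] at hl
    have hG : G (C (c l) * X 0 ^ Δ.β i + C (e l) * X 1 ^ Δ.β j) =
      algebraMap k _ (c l) * T Δ i ^ Δ.β i + algebraMap k _ (e l) * T Δ j ^ Δ.β j := by
      simp [G]
    rw [hG]
    have e1 : c l = d⁻¹ * (vp Δ l * vq Δ j - vp Δ j * vq Δ l) := by simp only [c]; ring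
    have e2 : e l = d⁻¹ * (vp Δ i * vq Δ l - vp Δ l * vq Δ i) := by simp only [e]; ring
    have e3 : algebraMap k Δ.Ring d⁻¹ * algebraMap k Δ.Ring d = 1 := by
      rw [← map_mul, inv_mul_cancel₀ hd, map_one]
    rw [e1, e2]
    simp only [map_mul, map_sub] at hl ⊢
    linear_combination T Δ l * e3 - algebraMap k Δ.Ring d⁻¹ * hl

/-- Step 2: the grading -/
def NN : ℕ := ∏ l, Δ.β l
def w (l : Fin (Δ.r + 1)) : ℕ := ∏ j ∈ Finset.univ.erase l, Δ.β j

lemma w_mul (l) : w Δ l * Δ.β l = NN Δ := by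
  rw [w, NN, Finset.prod_erase_mul _ _ (Finset.mem_univ l)]
lemma w_pos (l) : 0 < w Δ l := Finset.prod_pos fun j _ => Δ.β_pos j
lemma dvd_w {i l} (h : i ≠ l) : Δ.β i ∣ w Δ l :=
  Finset.dvd_prod_of_mem _ (Finset.mem_erase.2 ⟨h, Finset.mem_univ _⟩)
lemma cop_w (i) : Nat.Coprime (Δ.β i) (w Δ i) :=
  Nat.Coprime.prod_right fun j hj => Δ.coprime i j (Finset.ne_of_mem_erase hj).symm

lemma D_aux {R : Type*} [CommRing R] [Algebra k R] {a b c : R} {p q : k} {m e N : ℕ}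
    (h : a ^ m = algebraMap k R p * b + algebraMap k R q * c) (hN : e * m = N) :
    (Polynomial.C a * Polynomial.X ^ e) ^ m =
      algebraMap k (Polynomial R) p * (Polynomial.C b * Polynomial.X ^ N) +
      algebraMap k (Polynomial R) q * (Polynomial.C c * Polynomial.X ^ N) := by
  rw [mul_pow, ← pow_mul, hN, ← Polynomial.C_pow, h,
        IsScalarTower.algebraMap_apply k R (Polynomial R),
        IsScalarTower.algebraMap_apply k R (Polynomial R), Polynomial.algebraMap_eq]
  simp only [Polynomial.C_add, Polynomial.C_mul]
  ring

def D : Δ.Ring →ₐ[k] Polynomial Δ.Ring :=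
  lift Δ (fun l => Polynomial.C (T Δ l) * Polynomial.X ^ w Δ l)
    (Polynomial.C (T Δ 0 ^ Δ.β 0) * Polynomial.X ^ NN Δ)
    (Polynomial.C (T Δ 1 ^ Δ.β 1) * Polynomial.X ^ NN Δ) (by
      intro l
      exact D_aux (T_rel Δ l) (w_mul Δ l))

lemma D_T (l) : D Δ (T Δ l) = Polynomial.C (T Δ l) * Polynomial.X ^ w Δ l := lift_T Δ _ _ _ _ l

def ep : Δ.Ring →ₐ[k] k := lift Δ 0 0 0 (by
  intro l; simp [(Δ.β_pos l).ne'])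
lemma ep_T (l) : ep Δ (T Δ l) = 0 := lift_T Δ _ _ _ _ l

lemma D_one (x) : (D Δ x).eval 1 = x := by
  induction x using T_induction with
  | hc c => rw [AlgHom.commutes,
      IsScalarTower.algebraMap_apply k Δ.Ring (Polynomial Δ.Ring)]; simp
  | ha x y hx hy => rw [map_add, Polynomial.eval_add, hx, hy]
  | hm x l hx => rw [map_mul, Polynomial.eval_mul, hx, D_T]; simp

lemma D_zero (x) : (D Δ x).eval 0 = algebraMap k _ (ep Δ x) := by
  induction x using T_induction with
  | hc c => rw [AlgHom.commutes, AlgHom.commutes,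
      IsScalarTower.algebraMap_apply k Δ.Ring (Polynomial Δ.Ring)]; simp
  | ha x y hx hy => rw [map_add, Polynomial.eval_add, hx, hy, map_add, map_add]
  | hm x l hx => rw [map_mul, Polynomial.eval_mul, map_mul, ep_T, D_T]; simp [(w_pos Δ l).ne']

lemma D_supp (i) (x) : ∀ e, (D Δ x).coeff e ≠ 0 → Δ.β i ∣ e ∨ w Δ i ≤ e := by
  induction x using T_induction with
  | hc c =>
    intro e he
    rw [AlgHom.commutes, IsScalarTower.algebraMap_apply k Δ.Ring (Polynomial Δ.Ring),
      Polynomial.algebraMap_eq, Polynomial.coeff_C] at he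
    by_cases h : e = 0
    · simp [h]
    · rw [if_neg h] at he; exact absurd rfl he
  | ha x y hx hy =>
    intro e he
    rw [map_add, Polynomial.coeff_add] at he
    by_cases h : (D Δ x).coeff e = 0
    · rw [h, zero_add] at he; exact hy e he
    · exact hx e h
  | hm x l hx =>
    intro e he
    rw [map_mul, D_T, ← mul_assoc, Polynomial.coeff_mul_X_pow', Polynomial.coeff_mul_C] at he
    split_ifs at he with hle
    · by_cases hl : i = l
      · right; rw [hl]; exact hle
      · have hh := hx (e - w Δ l) (left_ne_zero_of_mul he)
        rcases hh with hh | hh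
        · left
          have := Nat.dvd_add hh (dvd_w Δ hl)
          rwa [Nat.sub_add_cancel hle] at this
        · right; omega
    · exact absurd rfl he

lemma exists_pt [IsAlgClosed k] (u v : k) : ∃ f : Δ.Ring →ₐ[k] k, ∀ l,
    f (T Δ l) ^ Δ.β l = vp Δ l * u + vq Δ l * v := by
  choose t ht using fun l => IsAlgClosed.exists_pow_nat_eq (vp Δ l * u + vq Δ l * v) (Δ.β_pos l)
  exact ⟨lift Δ t u v ht, fun l => by rw [lift_T]; exact ht l⟩

lemma T_ne [IsAlgClosed k] (i) : T Δ i ≠ 0 := by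
  intro h
  rcases vne Δ i with h' | h'
  · obtain ⟨f, hf⟩ := exists_pt Δ 1 0
    have := hf i
    rw [h, map_zero, zero_pow (Δ.β_pos i).ne'] at this
    apply h'; linear_combination -this
  · obtain ⟨f, hf⟩ := exists_pt Δ 0 1
    have := hf i
    rw [h, map_zero, zero_pow (Δ.β_pos i).ne'] at this
    apply h'; linear_combination -this

lemma mono_factor {R : Type*} [CommRing R] [IsDomain R] {p q : Polynomial R} {a : R} (ha : a ≠ 0)
    {N : ℕ} (h : p * q = Polynomial.C a * Polynomial.X ^ N) :
    p.natDegree = p.natTrailingDegree ∧ q.natDegree = q.natTrailingDegree ∧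
    p.natDegree + q.natDegree = N := by
  have hne : p * q ≠ 0 := by
    rw [h]; exact mul_ne_zero (Polynomial.C_ne_zero.2 ha) (pow_ne_zero _ Polynomial.X_ne_zero)
  have hp := left_ne_zero_of_mul hne
  have hq := right_ne_zero_of_mul hne
  have h1 := Polynomial.natDegree_mul hp hq
  have h2 := Polynomial.natTrailingDegree_mul hp hq
  rw [h, Polynomial.natDegree_C_mul_X_pow _ _ ha] at h1
  rw [h, Polynomial.C_mul_X_pow_eq_monomial, Polynomial.natTrailingDegree_monomial ha] at h2
  have h3 := Polynomial.natTrailingDegree_le_natDegree p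
  have h4 := Polynomial.natTrailingDegree_le_natDegree q
  omega

lemma unit_of_deg_zero [IsDomain Δ.Ring] {x : Δ.Ring} (hx : x ≠ 0) (h : (D Δ x).natDegree = 0) :
    IsUnit x := by
  rw [Polynomial.natDegree_eq_zero] at h
  obtain ⟨c, hc⟩ := h
  have h1 := D_one Δ x
  have h0 := D_zero Δ x
  rw [← hc, Polynomial.eval_C] at h1 h0
  rw [← h1, h0] at hx ⊢
  have : ep Δ x ≠ 0 := by
    intro h'; rw [h', map_zero] at hx; exact hx rfl
  exact (isUnit_iff_ne_zero.2 this).map _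

lemma T_irr [IsAlgClosed k] [IsDomain Δ.Ring] {i} (hi : 2 ≤ Δ.β i) : Irreducible (T Δ i) := by
  refine ⟨?_, ?_⟩
  · intro h
    have := h.map (ep Δ)
    rw [ep_T] at this
    exact not_isUnit_zero this
  · intro x y hxy
    have hne := T_ne Δ i
    have hx : x ≠ 0 := by rintro rfl; simp at hxy; exact hne hxy
    have hy : y ≠ 0 := by rintro rfl; simp at hxy; exact hne hxy
    have hD : D Δ x * D Δ y = Polynomial.C (T Δ i) * Polynomial.X ^ w Δ i := by
      rw [← map_mul, ← hxy, D_T]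
    have hDne : D Δ x * D Δ y ≠ 0 := by
      rw [hD]; exact mul_ne_zero (Polynomial.C_ne_zero.2 hne) (pow_ne_zero _ Polynomial.X_ne_zero)
    obtain ⟨-, -, h3⟩ := mono_factor hne hD
    have sx := D_supp Δ i x _ (by
      rw [Polynomial.coeff_natDegree]; exact Polynomial.leadingCoeff_ne_zero.2 (left_ne_zero_of_mul hDne))
    have sy := D_supp Δ i y _ (by
      rw [Polynomial.coeff_natDegree]; exact Polynomial.leadingCoeff_ne_zero.2 (right_ne_zero_of_mul hDne))
    rcases sx with sx | sx
    · rcases sy with sy | sy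
      · exfalso
        have := Nat.dvd_add sx sy
        rw [h3] at this
        have := Nat.Coprime.eq_one_of_dvd (cop_w Δ i) this
        omega
      · left; exact unit_of_deg_zero Δ hx (by omega)
    · right; exact unit_of_deg_zero Δ hy (by omega)

lemma T_nonassoc [IsAlgClosed k] [IsDomain Δ.Ring] {i j} (hij : i ≠ j) (hi : 2 ≤ Δ.β i) (c : k)
    (h : T Δ i = algebraMap k _ c * T Δ j) : False := by
  have hne := T_ne Δ i
  have h1 := congrArg (D Δ) h
  rw [map_mul, AlgHom.commutes, D_T, D_T,
    IsScalarTower.algebraMap_apply k Δ.Ring (Polynomial Δ.Ring), Polynomial.algebraMap_eq,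
    ← mul_assoc, ← Polynomial.C_mul, ← h] at h1
  have h2 := congrArg Polynomial.natDegree h1
  rw [Polynomial.natDegree_C_mul_X_pow _ _ hne, Polynomial.natDegree_C_mul_X_pow _ _ hne] at h2
  have h3 : Δ.β i = Δ.β j := by
    have e1 := w_mul Δ i
    have e2 := w_mul Δ j
    rw [h2, ← e2] at e1
    exact Nat.eq_of_mul_eq_mul_left (w_pos Δ j) e1
  have h4 := Δ.coprime i j hij
  rw [← h3, Nat.coprime_self] at h4
  omega

lemma cases_idx : (∃ i j l : Fin (Δ.r + 1), i ≠ j ∧ j ≠ l ∧ i ≠ l ∧ 2 ≤ Δ.β i ∧ 2 ≤ Δ.β j ∧ 2 ≤ Δ.β l) ∨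
    ∃ i j : Fin (Δ.r + 1), i ≠ j ∧ ∀ l, l ≠ i → l ≠ j → Δ.β l = 1 := by
  classical
  let S : Finset (Fin (Δ.r + 1)) := Finset.univ.filter fun l => 2 ≤ Δ.β l
  rcases Nat.lt_or_ge 2 S.card with h | h
  · left
    obtain ⟨a, b, c, ha, hb, hc, hab, hac, hbc⟩ := Finset.two_lt_card_iff.1 h
    exact ⟨a, b, c, hab, hbc, hac, (Finset.mem_filter.1 ha).2, (Finset.mem_filter.1 hb).2,
      (Finset.mem_filter.1 hc).2⟩
  · right
    obtain ⟨U, hU, hc⟩ := Finset.exists_superset_card_eq h (by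
      rw [Fintype.card_fin]; have := Δ.one_le_r; omega)
    obtain ⟨i, j, hij, rfl⟩ := Finset.card_eq_two.1 hc
    refine ⟨i, j, hij, fun l h1 h2 => ?_⟩
    by_contra hb
    have hp := Δ.β_pos l
    have : l ∈ S := Finset.mem_filter.2 ⟨Finset.mem_univ _, by omega⟩
    have := hU this
    simp at this
    tauto

end mori
end
end E8

namespace E8
section fin
variable {k : Type*} [Field k]

lemma three_case [IsAlgClosed k] [CharZero k] (Δ : MoriData k)
    {B : Type*} [CommRing B] [Algebra k B]
    {n : ℕ} (φ : B ≃ₐ[k] MvPolynomial (Fin (n + 1)) k)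
    (A : Subalgebra k B)
    (hfc : ∀ r s : B, r ≠ 0 → s ≠ 0 → r * s ∈ A → r ∈ A ∧ s ∈ A)
    (ψ : A ≃ₐ[k] Δ.Ring) {i j l : Fin (Δ.r + 1)} (hij : i ≠ j) (hjl : j ≠ l) (hil : i ≠ l)
    (hi : 2 ≤ Δ.β i) (hj : 2 ≤ Δ.β j) (hl : 2 ≤ Δ.β l) : False := by
  haveI : IsDomain B := φ.toMulEquiv.isDomain _
  haveI : IsDomain Δ.Ring := ψ.symm.toMulEquiv.isDomain _
  let g : Δ.Ring →ₐ[k] MvPolynomial (Fin (n + 1)) k :=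
    (φ : B →ₐ[k] _).comp (A.val.comp (ψ.symm : Δ.Ring →ₐ[k] A))
  have hg : ∀ x, g x = φ (ψ.symm x : B) := fun x => rfl
  have hginj : Function.Injective g := by
    intro x y h
    rw [hg, hg] at h
    exact ψ.symm.injective (Subtype.ext (φ.injective h))
  have hgfc : ∀ x f h, x ≠ 0 → g x = f * h → ∃ a b, g a = f ∧ g b = h ∧ x = a * b := by
    intro x f h hx hxe
    have hne : f * h ≠ 0 := by
      rw [← hxe]; intro h0; exact hx (hginj (h0.trans (map_zero g).symm))
    have e : φ.symm f * φ.symm h = (ψ.symm x : B) := by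
      rw [← map_mul, ← hxe, hg, AlgEquiv.symm_apply_apply]
    obtain ⟨h1, h2⟩ := hfc (φ.symm f) (φ.symm h)
      (by simpa using left_ne_zero_of_mul hne) (by simpa using right_ne_zero_of_mul hne)
      (by rw [e]; exact Subtype.property _)
    have k1 : g (ψ ⟨_, h1⟩) = f := by rw [hg, AlgEquiv.symm_apply_apply]; simp
    have k2 : g (ψ ⟨_, h2⟩) = h := by rw [hg, AlgEquiv.symm_apply_apply]; simp
    refine ⟨_, _, k1, k2, hginj ?_⟩
    rw [map_mul, k1, k2, hxe]
  have hprime : ∀ i, 2 ≤ Δ.β i → Prime (g (T Δ i)) := by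
    intro i hi
    rw [← irreducible_iff_prime]
    have hT := T_irr Δ hi
    refine ⟨?_, ?_⟩
    · intro hu
      obtain ⟨v, hv⟩ := hu.exists_right_inv
      obtain ⟨a, b, ha, hb, hab⟩ := hgfc 1 _ _ one_ne_zero (by rw [hv, map_one])
      rw [hginj ha] at hab
      exact hT.not_isUnit (IsUnit.of_mul_eq_one _ hab.symm)
    · intro f h hfh
      obtain ⟨a, b, ha, hb, hab⟩ := hgfc _ _ _ (T_ne Δ i) hfh
      rw [← ha, ← hb]
      exact (hT.isUnit_or_isUnit hab).imp (fun h => h.map g) (fun h => h.map g)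
  have hna : ∀ i j, i ≠ j → 2 ≤ Δ.β i → ¬ Associated (g (T Δ i)) (g (T Δ j)) := by
    intro i j hij hi has
    obtain ⟨u, hu⟩ := has.symm
    have hu2 := u.isUnit
    rw [isUnit_iff_eq_C_of_isReduced] at hu2
    obtain ⟨d, -, hd⟩ := hu2
    refine T_nonassoc Δ hij hi d (hginj ?_)
    rw [map_mul, AlgHom.commutes, ← hu, hd, mul_comm]; rfl
  refine tri_final (hprime i hi) (hprime j hj) (hprime l hl) (hna i j hij hi) (hna j l hjl hj)
    (hna i l hil hi) (det_ne Δ hjl) (det_ne Δ hil.symm) (det_ne Δ hij) hi hj hl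
    (Δ.coprime i j hij) (Δ.coprime j l hjl) (Δ.coprime l i hil.symm) ?_
  have := congrArg g (T_lin Δ i j l)
  rw [map_zero, map_add, map_add, map_mul, map_mul, map_mul, AlgHom.commutes, AlgHom.commutes,
    AlgHom.commutes, map_pow, map_pow, map_pow] at this
  exact this
end fin
end E8

/-- Let `k` be algebraically closed of characteristic zero, `Δ` trinomial data
over `k` with unit partition, `B` a `k`-algebra isomorphic to a polynomial ring in `m ≥ 2`
variables, and `A ⊆ B` a factorially closed `k`-subalgebra isomorphic to `k[Δ]`.  Then `A` is
a polynomial ring in two variables over `k`. -/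
theorem factoriallyClosed_trinomial_subalgebra_of_polynomialRing
    [IsAlgClosed k] [CharZero k] (Δ : MoriData k)
    (B : Type*) [CommRing B] [Algebra k B]
    (m : ℕ) (hm : 2 ≤ m) (hB : Nonempty (B ≃ₐ[k] MvPolynomial (Fin m) k))
    (A : Subalgebra k B)
    (hfc : ∀ r s : B, r ≠ 0 → s ≠ 0 → r * s ∈ A → r ∈ A ∧ s ∈ A)
    (hA : Nonempty (A ≃ₐ[k] Δ.Ring)) :
    Nonempty (A ≃ₐ[k] MvPolynomial (Fin 2) k) := by
  obtain ⟨φ⟩ := hB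
  obtain ⟨ψ⟩ := hA
  rcases E8.cases_idx Δ with ⟨i, j, l, hij, hjl, hil, hi, hj, hl⟩ | ⟨i, j, hij, h⟩
  · obtain ⟨n, rfl⟩ : ∃ n, m = n + 1 := ⟨m - 1, by omega⟩
    exact (E8.three_case Δ φ A hfc ψ hij hjl hil hi hj hl).elim
  · obtain ⟨e⟩ := E8.poly_case Δ hij h
    exact ⟨ψ.trans e⟩
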